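/- arXiv:math/0606007 — 2 statements merged into one kernel-verified Lean document; each statement's English description precedes it below -/
import Mathlib

section
/- (Fáry/Milnor theorem) If K : ℝ/ℤ → ℝ³ is a knotted closed curve, then its total curvature satisfies TC(K) ≥ 4π. Equivalently, every closed knot in ℝ³ with total curvature strictly less than 4π is unknotted. -/
open Set Filter MeasureTheory
open scoped ENNReal NNReal RealInnerProductSpace

noncomputable section

/-- The parameters `u 0 < u 1 < ⋯ < u m` of a polygon inscribed in (the restriction to
`[a,b]` of) a curve: strictly increasing parameters lying in `[a,b]`. -/
def InscribedIn (a b : ℝ) (m : ℕ) (u : ℕ → ℝ) : Prop :=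
  (∀ i < m, u i < u (i + 1)) ∧ ∀ i ≤ m, u i ∈ Set.Icc a b

/-- The length of the polygon inscribed in the curve `γ` with parameters `u 0, …, u m`:
the sum of the euclidean lengths of its edges. -/
def polyLen {E : Type*} [NormedAddCommGroup E] (γ : ℝ → E) (m : ℕ) (u : ℕ → ℝ) : ℝ :=
  ∑ i ∈ Finset.range m, ‖γ (u (i + 1)) - γ (u i)‖

/-- The (Jordan) length of the arc `γ : [a,b] → E`: the supremum of the lengths of all
inscribed polygons, valued in `[0,∞]`. -/
def arcLen {E : Type*} [NormedAddCommGroup E] (γ : ℝ → E) (a b : ℝ) : ℝ≥0∞ :=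
  ⨆ (m : ℕ) (u : ℕ → ℝ) (_ : InscribedIn a b m u), ENNReal.ofReal (polyLen γ m u)

/-- The list of vertices of the polygon inscribed in `γ` with parameters `u 0, …, u m`. -/
def vertexList {E : Type*} (γ : ℝ → E) (m : ℕ) (u : ℕ → ℝ) : List E :=
  (List.range (m + 1)).map fun i => γ (u i)

/-- Collapse consecutive equal entries of a list to single entries. -/
def collapse {E : Type*} (l : List E) : List E :=
  @List.destutter E (· ≠ ·) (Classical.decRel _) l

/-- The sum of the turning angles of a polygon given by its list of vertices: at each
interior vertex, the angle in `[0,π]` between the incoming and outgoing edge vectors. -/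
def turnSum {E : Type*} [NormedAddCommGroup E] [InnerProductSpace ℝ E] : List E → ℝ
  | a :: b :: c :: l => InnerProductGeometry.angle (b - a) (c - b) + turnSum (b :: c :: l)
  | _ => 0

/-- The sum, at each interior vertex, of the euclidean distance `‖u₊ - u₋‖` between the
unit tangent vectors of the incoming and outgoing edges (so a corner of turning angle θ
contributes `2 sin(θ/2)`). -/
def starSum {E : Type*} [NormedAddCommGroup E] [InnerProductSpace ℝ E] : List E → ℝ
  | a :: b :: c :: l =>
      ‖(‖c - b‖⁻¹ • (c - b)) - (‖b - a‖⁻¹ • (b - a))‖ + starSum (b :: c :: l)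
  | _ => 0

/-- The total curvature of the polygon inscribed in `γ` with parameters `u 0, …, u m`:
after collapsing consecutive equal vertices, the sum of its turning angles. -/
def polyTC {E : Type*} [NormedAddCommGroup E] [InnerProductSpace ℝ E]
    (γ : ℝ → E) (m : ℕ) (u : ℕ → ℝ) : ℝ :=
  turnSum (collapse (vertexList γ m u))

/-- The total curvature of the arc `γ : [a,b] → E`: the supremum over all inscribed
polygons of their total curvature, valued in `[0,∞]`. -/
def arcTC {E : Type*} [NormedAddCommGroup E] [InnerProductSpace ℝ E]
    (γ : ℝ → E) (a b : ℝ) : ℝ≥0∞ :=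
  ⨆ (m : ℕ) (u : ℕ → ℝ) (_ : InscribedIn a b m u), ENNReal.ofReal (polyTC γ m u)

/-- The euclidean total curvature `TC*` of the polygon inscribed in `γ` with parameters
`u 0, …, u m`. -/
def polyTCStar {E : Type*} [NormedAddCommGroup E] [InnerProductSpace ℝ E]
    (γ : ℝ → E) (m : ℕ) (u : ℕ → ℝ) : ℝ :=
  starSum (collapse (vertexList γ m u))

/-- The euclidean total curvature `TC*` of the arc `γ : [a,b] → E`. -/
def arcTCStar {E : Type*} [NormedAddCommGroup E] [InnerProductSpace ℝ E]
    (γ : ℝ → E) (a b : ℝ) : ℝ≥0∞ :=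
  ⨆ (m : ℕ) (u : ℕ → ℝ) (_ : InscribedIn a b m u), ENNReal.ofReal (polyTCStar γ m u)

/-- Cyclically ordered parameters `u 0 < ⋯ < u m` in `[0,1)` of a polygon inscribed in a
loop `γ : ℝ/ℤ → E`. -/
def LoopInscribed (m : ℕ) (u : ℕ → ℝ) : Prop :=
  (∀ i < m, u i < u (i + 1)) ∧ ∀ i ≤ m, u i ∈ Set.Ico (0 : ℝ) 1

/-- The list of vertices of the polygon inscribed in the loop `γ` with parameters
`u 0, …, u m`. -/
def loopVertexList {E : Type*} (γ : AddCircle (1 : ℝ) → E) (m : ℕ) (u : ℕ → ℝ) : List E :=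
  (List.range (m + 1)).map fun i => γ (u i : ℝ)

/-- The sum of the lengths of the successive edges of a list of points. -/
def lenList {E : Type*} [NormedAddCommGroup E] : List E → ℝ
  | a :: b :: l => ‖b - a‖ + lenList (b :: l)
  | _ => 0

/-- The length of the closed polygon inscribed in the loop `γ` with parameters
`u 0, …, u m`: the sum of the edge lengths, indices taken cyclically. -/
def loopPolyLen {E : Type*} [NormedAddCommGroup E]
    (γ : AddCircle (1 : ℝ) → E) (m : ℕ) (u : ℕ → ℝ) : ℝ :=
  lenList (loopVertexList γ m u ++ (loopVertexList γ m u).take 1)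

/-- The length of a loop `γ : ℝ/ℤ → E`: the supremum of the lengths of inscribed closed
polygons, valued in `[0,∞]`. -/
def loopLen {E : Type*} [NormedAddCommGroup E] (γ : AddCircle (1 : ℝ) → E) : ℝ≥0∞ :=
  ⨆ (m : ℕ) (u : ℕ → ℝ) (_ : LoopInscribed m u), ENNReal.ofReal (loopPolyLen γ m u)

open Classical in
/-- Collapse consecutive equal vertices of a *cyclic* list of vertices: collapse
consecutive duplicates, also across the wrap-around. -/
def cyclicCollapse {E : Type*} (l : List E) : List E :=
  if 2 ≤ (collapse l).length ∧ (collapse l).getLast? = (collapse l).head? then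
    (collapse l).dropLast
  else collapse l

/-- The total curvature of the closed polygon inscribed in the loop `γ` with parameters
`u 0, …, u m`: after cyclically collapsing consecutive equal vertices, the sum of the
turning angles at all of its vertices (every vertex of a closed polygon is interior). -/
def loopPolyTC {E : Type*} [NormedAddCommGroup E] [InnerProductSpace ℝ E]
    (γ : AddCircle (1 : ℝ) → E) (m : ℕ) (u : ℕ → ℝ) : ℝ :=
  turnSum (cyclicCollapse (loopVertexList γ m u) ++
    (cyclicCollapse (loopVertexList γ m u)).take 2)

/-- The total curvature of a loop `γ : ℝ/ℤ → E`: the supremum over all inscribed closed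
polygons of their total curvature, valued in `[0,∞]`. -/
def loopTC {E : Type*} [NormedAddCommGroup E] [InnerProductSpace ℝ E]
    (γ : AddCircle (1 : ℝ) → E) : ℝ≥0∞ :=
  ⨆ (m : ℕ) (u : ℕ → ℝ) (_ : LoopInscribed m u), ENNReal.ofReal (loopPolyTC γ m u)

/-- The euclidean total curvature `TC*` of the closed inscribed polygon. -/
def loopPolyTCStar {E : Type*} [NormedAddCommGroup E] [InnerProductSpace ℝ E]
    (γ : AddCircle (1 : ℝ) → E) (m : ℕ) (u : ℕ → ℝ) : ℝ :=
  starSum (cyclicCollapse (loopVertexList γ m u) ++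
    (cyclicCollapse (loopVertexList γ m u)).take 2)

/-- The euclidean total curvature `TC*` of a loop `γ : ℝ/ℤ → E`. -/
def loopTCStar {E : Type*} [NormedAddCommGroup E] [InnerProductSpace ℝ E]
    (γ : AddCircle (1 : ℝ) → E) : ℝ≥0∞ :=
  ⨆ (m : ℕ) (u : ℕ → ℝ) (_ : LoopInscribed m u), ENNReal.ofReal (loopPolyTCStar γ m u)

end

/-- `K : ℝ/ℤ → ℝ³` is unknotted if there is an ambient isotopy `H : [0,1] × ℝ³ → ℝ³`
with `H 0 = id`, each `H t` a homeomorphism of `ℝ³`, and `H 1` carrying the image of `K`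
onto the round unit circle in the `xy`-plane. -/
def Unknotted (K : AddCircle (1 : ℝ) → EuclideanSpace ℝ (Fin 3)) : Prop :=
  ∃ H : ℝ × EuclideanSpace ℝ (Fin 3) → EuclideanSpace ℝ (Fin 3),
    ContinuousOn H (Set.Icc (0 : ℝ) 1 ×ˢ Set.univ) ∧
    (∀ x, H (0, x) = x) ∧
    (∀ t ∈ Set.Icc (0 : ℝ) 1, IsHomeomorph fun x => H (t, x)) ∧
    (fun x => H (1, x)) '' Set.range K =
      {p : EuclideanSpace ℝ (Fin 3) | p 0 ^ 2 + p 1 ^ 2 = 1 ∧ p 2 = 0}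

/-!
Suppose `TC(K) < 4π`. An edge pair of an inscribed polygon turning by the angle `θ` gives a local
extremum of the height `⟪·, x⟫` for a proportion `θ / π` of the directions `x`, so on average over
`x` the height of an inscribed polygon of `K` has at most `TC(K) / π < 4` local extrema. By Fatou's
lemma some generic `x` sees fewer than four extrema along infinitely many of the equidistant
polygons, which rules out two separate peaks of `⟪K, x⟫`: the height strictly increases along one
arc of the knot and strictly decreases along the other. At every intermediate height `y` the knot
then consists of exactly two points `a y ≠ b y` of the plane. Since an interval is simply connected,
`b y - a y` has a continuous logarithm, so level by level a translation, a rotation and a stretching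
move the pair `a y, b y` to the standard pair `±√(1 - y²)` of the circle. These moves are cut off at
a distance comparable to `‖b y - a y‖`, so that they extend continuously by the identity past the
top and the bottom of the knot.
-/

open InnerProductGeometry
open scoped Topology

section Crofton

theorem volume_cos_mul_cos_neg_le (α β t : ℝ) :
    volume ({φ : ℝ | Real.cos (φ - α) * Real.cos (φ - β) < 0} ∩ Ioc t (t + Real.pi)) ≤
      ENNReal.ofReal |α - β| := by
  wlog hαβ : α ≤ β generalizing α β
  · simpa only [mul_comm, abs_sub_comm] using this β α (le_of_not_ge hαβ)
  have h_periodic : Function.Periodic (fun φ => Real.cos (φ - α) * Real.cos (φ - β)) Real.pi :=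
    fun φ => by simp only [add_sub_right_comm, Real.cos_add_pi, neg_mul_neg]
  have h_subset : {φ : ℝ | Real.cos (φ - α) * Real.cos (φ - β) < 0} ∩
      Ioc (β - Real.pi / 2) (β - Real.pi / 2 + Real.pi) ⊆
        Ioc (α + Real.pi / 2) (β + Real.pi / 2) := by
    rintro φ ⟨hφ, hlo, hhi⟩
    rw [mem_ofPred_eq] at hφ
    refine ⟨lt_of_not_ge fun hle => hφ.not_ge (mul_nonneg ?_ ?_), by linarith⟩ <;>
      exact Real.cos_nonneg_of_mem_Icc ⟨by linarith, by linarith⟩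
  calc volume ({φ : ℝ | Real.cos (φ - α) * Real.cos (φ - β) < 0} ∩ Ioc t (t + Real.pi))
      = volume ({φ : ℝ | Real.cos (φ - α) * Real.cos (φ - β) < 0} ∩
          Ioc (β - Real.pi / 2) (β - Real.pi / 2 + Real.pi)) :=
        (isAddFundamentalDomain_Ioc Real.pi_pos t volume).measure_set_eq
          (isAddFundamentalDomain_Ioc Real.pi_pos (β - Real.pi / 2) volume)
          (measurableSet_lt (by fun_prop) measurable_const) fun g => ext fun φ =>
            iff_of_eq (congrArg (· < (0 : ℝ)) (h_periodic.map_vadd_zmultiples g φ))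
    _ ≤ volume (Ioc (α + Real.pi / 2) (β + Real.pi / 2)) := measure_mono h_subset
    _ = ENNReal.ofReal |α - β| := by
        rw [Real.volume_Ioc, add_sub_add_right_eq_sub, abs_of_nonpos (sub_nonpos.2 hαβ), neg_sub]

theorem inner_circleExp_smul (r α φ : ℝ) (z : ℂ) :
    ⟪(r * Complex.exp (α * Complex.I) : ℂ), Circle.exp φ • z⟫ =
      r * ‖z‖ * Real.cos (φ - (α - z.arg)) := by
  have h_polar : Circle.exp φ • z * (starRingEnd ℂ) (r * Complex.exp (α * Complex.I)) =
      (r * ‖z‖ : ℝ) * Complex.exp ((φ - (α - z.arg) : ℝ) * Complex.I) := by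
    conv_lhs => rw [← Complex.norm_mul_exp_arg_mul_I z]
    simp only [Circle.smul_def, Circle.coe_exp, smul_eq_mul, map_mul, Complex.conj_ofReal,
      ← Complex.exp_conj, Complex.conj_I, Complex.ofReal_sub, Complex.ofReal_mul, mul_neg,
      sub_mul, Complex.exp_sub, Complex.exp_neg]
    field_simp
  rw [Complex.inner, h_polar, Complex.re_ofReal_mul, Complex.exp_ofReal_mul_I_re]

theorem volume_inner_circleExp_smul_mul_neg_le {a b : ℂ} (ha : a ≠ 0) (hb : b ≠ 0) (z : ℂ) :
    volume ({φ : ℝ | ⟪a, Circle.exp φ • z⟫ * ⟪b, Circle.exp φ • z⟫ < 0} ∩ Ioc 0 Real.pi) ≤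
      ENNReal.ofReal (angle a b) := by
  have ha_polar : a = ‖a‖ * Complex.exp ((b.arg + (a / b).arg : ℝ) * Complex.I) := by
    rw [Complex.ofReal_add, add_mul, Complex.exp_add]
    calc a = b * (a / b) := by field_simp
      _ = (‖b‖ * Complex.exp (b.arg * Complex.I)) *
            (‖a / b‖ * Complex.exp ((a / b).arg * Complex.I)) := by
          rw [Complex.norm_mul_exp_arg_mul_I, Complex.norm_mul_exp_arg_mul_I]
      _ = _ := by
          rw [norm_div, Complex.ofReal_div]
          have : (‖b‖ : ℂ) ≠ 0 := by simpa using hb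
          field_simp
  have h_subset : {φ : ℝ | ⟪a, Circle.exp φ • z⟫ * ⟪b, Circle.exp φ • z⟫ < 0} ⊆
      {φ | Real.cos (φ - (b.arg + (a / b).arg - z.arg)) * Real.cos (φ - (b.arg - z.arg)) < 0} := by
    intro φ hφ
    have ha_inner := inner_circleExp_smul ‖a‖ (b.arg + (a / b).arg) φ z
    have hb_inner := inner_circleExp_smul ‖b‖ b.arg φ z
    rw [← ha_polar] at ha_inner
    rw [Complex.norm_mul_exp_arg_mul_I] at hb_inner
    rw [mem_ofPred_eq, ha_inner, hb_inner, mul_mul_mul_comm] at hφ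
    exact neg_of_mul_neg_right hφ (by positivity)
  calc _ ≤ volume ({φ : ℝ | Real.cos (φ - (b.arg + (a / b).arg - z.arg)) *
          Real.cos (φ - (b.arg - z.arg)) < 0} ∩ Ioc 0 (0 + Real.pi)) := by
        rw [zero_add]
        exact measure_mono (inter_subset_inter_left _ h_subset)
    _ ≤ _ := volume_cos_mul_cos_neg_le _ _ _
    _ = _ := by rw [Complex.angle_eq_abs_arg ha hb]; ring_nf

theorem measure_inner_mul_inner_neg_le_of_circle_invariant {ν : Measure ℂ} [SFinite ν]
    (hν : ∀ c : Circle, MeasurePreserving (fun z : ℂ => c • z) ν ν) {a b : ℂ}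
    (ha : a ≠ 0) (hb : b ≠ 0) :
    ν {z | ⟪a, z⟫ * ⟪b, z⟫ < 0} ≤ ENNReal.ofReal (angle a b / Real.pi) * ν univ := by
  have h_meas : MeasurableSet
      {p : ℝ × ℂ | ⟪a, Circle.exp p.1 • p.2⟫ * ⟪b, Circle.exp p.1 • p.2⟫ < 0} :=
    measurableSet_lt (Continuous.measurable (by simp only [Circle.smul_def]; fun_prop))
      measurable_const
  have h_average : ENNReal.ofReal Real.pi * ν {z | ⟪a, z⟫ * ⟪b, z⟫ < 0} ≤
      ENNReal.ofReal (angle a b) * ν univ := by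
    calc ENNReal.ofReal Real.pi * ν {z | ⟪a, z⟫ * ⟪b, z⟫ < 0}
        = ∫⁻ φ in Ioc 0 Real.pi,
            ν {z | ⟪a, Circle.exp φ • z⟫ * ⟪b, Circle.exp φ • z⟫ < 0} := by
          have h_rotate (φ : ℝ) : ν {z | ⟪a, Circle.exp φ • z⟫ * ⟪b, Circle.exp φ • z⟫ < 0} =
              ν {z | ⟪a, z⟫ * ⟪b, z⟫ < 0} :=
            (hν (Circle.exp φ)).measure_preimage (s := {z | ⟪a, z⟫ * ⟪b, z⟫ < 0})
              (measurableSet_lt (by fun_prop) measurable_const).nullMeasurableSet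
          simp only [h_rotate, setLIntegral_const, Real.volume_Ioc, sub_zero, mul_comm]
      _ = ∫⁻ z, volume ({φ : ℝ | ⟪a, Circle.exp φ • z⟫ * ⟪b, Circle.exp φ • z⟫ < 0} ∩
            Ioc 0 Real.pi) ∂ν := by
          have h_fubini := (Measure.prod_apply (μ := volume.restrict (Ioc 0 Real.pi)) (ν := ν)
            h_meas).symm.trans (Measure.prod_apply_symm h_meas)
          simp only [Measure.restrict_apply (measurable_prodMk_right h_meas)] at h_fubini
          exact h_fubini
      _ ≤ ∫⁻ _, ENNReal.ofReal (angle a b) ∂ν :=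
          lintegral_mono fun z => volume_inner_circleExp_smul_mul_neg_le ha hb z
      _ = _ := lintegral_const _
  rw [ENNReal.ofReal_div_of_pos Real.pi_pos, ← ENNReal.mul_div_right_comm,
    ENNReal.le_div_iff_mul_le (by simp [Real.pi_pos]) (by simp), mul_comm]
  exact h_average

variable {E : Type*} [NormedAddCommGroup E] [InnerProductSpace ℝ E]

theorem exists_linearIsometry_mem_range {a b : E} (h : LinearIndependent ℝ ![a, b]) :
    ∃ ι : ℂ →ₗᵢ[ℝ] E, a ∈ range ι ∧ b ∈ range ι := by
  have h_rank : Module.finrank ℝ (Submodule.span ℝ (range ![a, b])) = 2 := by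
    simpa using finrank_span_eq_card h
  have := Module.finite_of_finrank_eq_succ h_rank
  let e := Complex.isometryOfOrthonormal
    ((stdOrthonormalBasis ℝ (Submodule.span ℝ (range ![a, b]))).reindex (finCongr h_rank))
  have h_mem (i : Fin 2) : ![a, b] i ∈ range ((Submodule.subtypeₗᵢ _).comp e.toLinearIsometry) :=
    ⟨e.symm ⟨_, Submodule.subset_span (mem_range_self i)⟩, by simp⟩
  exact ⟨_, h_mem 0, h_mem 1⟩

variable [FiniteDimensional ℝ E]

theorem exists_linearIsometryEquiv_adjoint_apply {F : Type*} [NormedAddCommGroup F]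
    [InnerProductSpace ℝ F] [CompleteSpace F] (ι : F →ₗᵢ[ℝ] E) (U : F ≃ₗᵢ[ℝ] F) :
    ∃ R : E ≃ₗᵢ[ℝ] E, ∀ x, ι.toContinuousLinearMap.adjoint (R x) =
      U (ι.toContinuousLinearMap.adjoint x) := by
  let L := (ι.comp U.toLinearIsometry).comp ι.equivRange.symm.toLinearIsometry
  let R := L.extend.toLinearIsometryEquiv rfl
  have hR (z : F) : R (ι z) = ι (U z) := by
    have h_extend := L.extend_apply (ι.equivRange z)
    simpa [L, R] using h_extend
  refine ⟨R, fun x => ext_inner_left ℝ fun z => ?_⟩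
  calc ⟪z, ι.toContinuousLinearMap.adjoint (R x)⟫ = ⟪ι z, R x⟫ :=
        ContinuousLinearMap.adjoint_inner_right _ _ _
    _ = ⟪R (ι (U.symm z)), R x⟫ := by rw [hR, U.apply_symm_apply]
    _ = ⟪U.symm z, ι.toContinuousLinearMap.adjoint x⟫ := by
        rw [R.inner_map_map, ContinuousLinearMap.adjoint_inner_right,
          LinearIsometry.coe_toContinuousLinearMap]
    _ = ⟪z, U (ι.toContinuousLinearMap.adjoint x)⟫ := by
        rw [← U.inner_map_map, U.apply_symm_apply]

variable [MeasurableSpace E] [BorelSpace E]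

theorem measure_inner_mul_inner_neg_le {μ : Measure E} [SFinite μ]
    (hμ : ∀ R : E ≃ₗᵢ[ℝ] E, MeasurePreserving R μ μ) (a b : E) :
    μ {x | ⟪a, x⟫ * ⟪b, x⟫ < 0} ≤ ENNReal.ofReal (angle a b / Real.pi) * μ univ := by
  by_cases ha : a = 0
  · simp [ha]
  by_cases hab : LinearIndependent ℝ ![a, b]
  · obtain ⟨ι, ⟨a, rfl⟩, b, rfl⟩ := exists_linearIsometry_mem_range hab
    let q := ι.toContinuousLinearMap.adjoint
    have hq (c : Circle) : MeasurePreserving (fun z : ℂ => c • z) (μ.map q) (μ.map q) := by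
      obtain ⟨R, hR⟩ := exists_linearIsometryEquiv_adjoint_apply ι (rotation c)
      exact (q.measurable.measurePreserving μ).of_semiconj (hμ R) hR (measurable_const_smul c)
    have h_plane := measure_inner_mul_inner_neg_le_of_circle_invariant hq (a := a) (b := b)
      (by rintro rfl; exact ha ι.map_zero) (by rintro rfl; exact hab.ne_zero 1 ι.map_zero)
    rw [Measure.map_apply q.measurable (measurableSet_lt (by fun_prop) measurable_const),
      Measure.map_apply q.measurable MeasurableSet.univ, preimage_univ] at h_plane
    simpa only [q, preimage_ofPred_eq, ContinuousLinearMap.adjoint_inner_right,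
      LinearIsometry.coe_toContinuousLinearMap, ι.angle_map] using h_plane
  · obtain ⟨r, rfl⟩ : ∃ r : ℝ, r • a = b := by simpa [LinearIndependent.pair_iff' ha] using hab
    simp only [real_inner_smul_left]
    rcases le_or_gt 0 r with hr | hr
    · have (x : E) : 0 ≤ ⟪a, x⟫ * (r * ⟪a, x⟫) := by
        rw [mul_left_comm]
        exact mul_nonneg hr (mul_self_nonneg _)
      simp [(this _).not_gt]
    · rw [angle_smul_right_of_neg _ _ hr, angle_self_neg_of_nonzero ha, div_self Real.pi_ne_zero,
        ENNReal.ofReal_one, one_mul]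
      exact measure_mono (subset_univ _)

end Crofton

section Sampling

/-- The vertices `K (i / n)` of the closed polygon inscribed in the loop `K` at `n` equidistant
parameters, indexed by all `i : ℕ` with period `n`. -/
noncomputable def sample {α : Type*} (K : AddCircle (1 : ℝ) → α) (n i : ℕ) : α :=
  K ((i / n : ℝ) : AddCircle (1 : ℝ))

variable {α : Type*} {K : AddCircle (1 : ℝ) → α} {n : ℕ}

theorem sample_add_self (hn : n ≠ 0) (i : ℕ) : sample K n (i + n) = sample K n i := by
  rw [sample, Nat.cast_add, add_div, div_self (Nat.cast_ne_zero.2 hn), AddCircle.coe_add_period,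
    sample]

theorem injOn_coe_div (n : ℕ) :
    InjOn (fun i : ℕ => ((i / n : ℝ) : AddCircle (1 : ℝ))) (Iio n) := by
  intro i hi j hj hij
  have hn : (0 : ℝ) < n := Nat.cast_pos.2 (pos_of_gt hi)
  have h_mem {i : ℕ} (hi : i < n) : (i / n : ℝ) ∈ Ico (0 : ℝ) (0 + 1) :=
    ⟨by positivity, by rw [zero_add, div_lt_one hn]; exact_mod_cast hi⟩
  rw [AddCircle.coe_eq_coe_iff_of_mem_Ico (h_mem hi) (h_mem hj), div_left_inj' hn.ne'] at hij
  exact_mod_cast hij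

theorem coe_succ_div_ne (hn : 2 ≤ n) (i : ℕ) :
    (((i + 1 : ℕ) / n : ℝ) : AddCircle (1 : ℝ)) ≠ ((i / n : ℝ) : AddCircle (1 : ℝ)) := by
  have h_step : ((1 / n : ℝ) : AddCircle (1 : ℝ)) ≠ ((0 : ℝ) : AddCircle (1 : ℝ)) := by
    simpa using (injOn_coe_div n).ne (mem_Iio.2 (one_lt_two.trans_le hn))
      (mem_Iio.2 (two_pos.trans_le hn)) one_ne_zero
  rw [Nat.cast_succ, add_div, AddCircle.coe_add]
  simpa using h_step

theorem injOn_sample (hK : Function.Injective K) (n : ℕ) : InjOn (sample K n) (Iio n) :=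
  hK.comp_injOn (injOn_coe_div n)

end Sampling

section PolygonalCurvature

variable {E : Type*} [NormedAddCommGroup E] [InnerProductSpace ℝ E]

/-- The total turning angle of the closed `n`-gon with vertices `v 0, …, v (n - 1)`, where `v` is
extended to all of `ℕ` with period `n`. -/
noncomputable def cyclicTurning (v : ℕ → E) (n : ℕ) : ℝ :=
  ∑ i ∈ Finset.range n, angle (v (i + 1) - v i) (v (i + 2) - v (i + 1))

theorem turnSum_map_range (v : ℕ → E) (n : ℕ) :
    turnSum ((List.range (n + 2)).map v) = cyclicTurning v n := by
  induction n generalizing v with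
  | zero => simp [List.range_succ, turnSum, cyclicTurning]
  | succ n ih =>
    calc turnSum ((List.range (n + 1 + 2)).map v)
        = angle (v 1 - v 0) (v 2 - v 1) +
            turnSum ((List.range (n + 2)).map fun i => v (i + 1)) := by
          simp [List.range_succ_eq_map, turnSum, Function.comp_def]
      _ = cyclicTurning v (n + 1) := by
          rw [ih, cyclicTurning, cyclicTurning, Finset.sum_range_succ', add_comm]

theorem cyclicCollapse_of_nodup {α : Type*} {l : List α} (hl : l.Nodup) : cyclicCollapse l = l := by
  have h_collapse : collapse l = l :=
    @List.destutter_of_isChain _ _ (Classical.decRel _) _ (List.Pairwise.isChain hl)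
  rw [cyclicCollapse, h_collapse, if_neg]
  rintro ⟨h_two, h_ends⟩
  have h_pos : 0 < l.length := two_pos.trans_le h_two
  rw [List.head?_eq_getElem?, List.getLast?_eq_getElem?,
    List.getElem?_inj (Nat.sub_lt h_pos one_pos) hl] at h_ends
  omega

theorem ofReal_cyclicTurning_sample_le_loopTC {K : AddCircle (1 : ℝ) → E}
    (hK : Function.Injective K) {n : ℕ} (hn : 2 ≤ n) :
    ENNReal.ofReal (cyclicTurning (sample K n) n) ≤ loopTC K := by
  obtain ⟨m, rfl⟩ : ∃ m, n = m + 1 := ⟨n - 1, by omega⟩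
  have h_inscribed : LoopInscribed m fun i => i / (m + 1 : ℕ) := by
    refine ⟨fun i _ => by dsimp only; gcongr; simp, fun i hi => ⟨by positivity, ?_⟩⟩
    rw [div_lt_one (by positivity)]
    exact_mod_cast Nat.lt_succ_of_le hi
  have h_vertices : cyclicCollapse (loopVertexList K m fun i => i / (m + 1 : ℕ)) =
      (List.range (m + 1)).map (sample K (m + 1)) :=
    cyclicCollapse_of_nodup <| List.nodup_range.map_on fun i hi j hj hij =>
      injOn_sample hK (m + 1) (List.mem_range.1 hi) (List.mem_range.1 hj) hij
  have h_closed : (List.range (m + 1)).map (sample K (m + 1)) ++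
      ((List.range (m + 1)).map (sample K (m + 1))).take 2 =
        (List.range (m + 1 + 2)).map (sample K (m + 1)) := by
    rw [List.range_add (n := m + 1) (m := 2), List.map_append, ← List.map_take, List.take_range,
      min_eq_left hn, List.map_map]
    congr 2
    funext i
    rw [Function.comp_apply, add_comm (m + 1), sample_add_self (Nat.succ_ne_zero m)]
  have h_poly : loopPolyTC K m (fun i => i / (m + 1 : ℕ)) =
      cyclicTurning (sample K (m + 1)) (m + 1) := by
    rw [loopPolyTC, h_vertices, h_closed, turnSum_map_range]
  rw [← h_poly]
  exact le_iSup₂_of_le m _ (le_iSup_of_le h_inscribed le_rfl)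

end PolygonalCurvature

section TurnCount

/-- The number of turning points (strict local extrema) of the closed sequence
`g 0, …, g (n - 1)`, where `g` is extended to all of `ℕ` with period `n`. -/
noncomputable def turnCount (g : ℕ → ℝ) (n : ℕ) : ℕ :=
  Finset.card {i ∈ Finset.range n | (g (i + 1) - g i) * (g (i + 2) - g (i + 1)) < 0}

variable {E : Type*} [NormedAddCommGroup E] [InnerProductSpace ℝ E]

theorem turnCount_inner_eq_sum (v : ℕ → E) (n : ℕ) (x : E) :
    (turnCount (fun i => ⟪v i, x⟫) n : ℝ≥0∞) = ∑ i ∈ Finset.range n,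
      {x | ⟪v (i + 1) - v i, x⟫ * ⟪v (i + 2) - v (i + 1), x⟫ < 0}.indicator 1 x := by
  simp only [turnCount, Finset.card_filter, Nat.cast_sum, Nat.cast_ite, Nat.cast_one,
    Nat.cast_zero, indicator_apply, mem_ofPred_eq, inner_sub_left, Pi.one_apply]

variable [MeasurableSpace E] [BorelSpace E]

theorem measurableSet_inner_mul_neg (a b : E) : MeasurableSet {x | ⟪a, x⟫ * ⟪b, x⟫ < 0} :=
  measurableSet_lt (by fun_prop) measurable_const

theorem measurable_turnCount_inner (v : ℕ → E) (n : ℕ) :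
    Measurable fun x => (turnCount (fun i => ⟪v i, x⟫) n : ℝ≥0∞) := by
  simp only [turnCount_inner_eq_sum]
  exact Finset.measurable_sum _ fun i _ =>
    measurable_one.indicator (measurableSet_inner_mul_neg _ _)

theorem lintegral_turnCount_inner_le [FiniteDimensional ℝ E] {μ : Measure E} [SFinite μ]
    (hμ : ∀ R : E ≃ₗᵢ[ℝ] E, MeasurePreserving R μ μ) (v : ℕ → E) (n : ℕ) :
    ∫⁻ x, turnCount (fun i => ⟪v i, x⟫) n ∂μ ≤
      ENNReal.ofReal (cyclicTurning v n / Real.pi) * μ univ := by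
  simp only [turnCount_inner_eq_sum]
  rw [lintegral_finsetSum _ fun i _ => measurable_one.indicator (measurableSet_inner_mul_neg _ _),
    cyclicTurning, Finset.sum_div, ENNReal.ofReal_sum_of_nonneg
      fun i _ => div_nonneg (angle_nonneg _ _) Real.pi_nonneg, Finset.sum_mul]
  gcongr with i
  rw [lintegral_indicator_one (measurableSet_inner_mul_neg _ _)]
  exact measure_inner_mul_inner_neg_le hμ _ _

variable [FiniteDimensional ℝ E]

theorem measurePreserving_cond_ball (R : E ≃ₗᵢ[ℝ] E) :
    MeasurePreserving R (ProbabilityTheory.cond volume (Metric.ball (0 : E) 1))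
      (ProbabilityTheory.cond volume (Metric.ball (0 : E) 1)) := by
  have h := R.measurePreserving.restrict_preimage (measurableSet_ball (x := (0 : E)) (ε := 1))
  rw [R.preimage_ball, map_zero] at h
  exact h.smul_measure _

theorem exists_frequently_turnCount_lt {K : AddCircle (1 : ℝ) → E} (hK : Function.Injective K)
    {k : ℕ} (hTC : loopTC K < ENNReal.ofReal (k * Real.pi)) {p : E → Prop} (hp : ∀ᵐ x, p x) :
    ∃ x, p x ∧ ∃ᶠ n in atTop, turnCount (fun i => ⟪sample K n i, x⟫) n < k := by
  set μ : Measure E := ProbabilityTheory.cond volume (Metric.ball 0 1)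
  have : IsProbabilityMeasure μ := ProbabilityTheory.cond_isProbabilityMeasure_of_finite
    (Metric.measure_ball_pos volume _ one_pos).ne' measure_ball_lt_top.ne
  let F (n : ℕ) (x : E) : ℝ≥0∞ := turnCount (fun i => ⟪sample K n i, x⟫) n
  have hF (n : ℕ) : Measurable (F n) := measurable_turnCount_inner _ n
  have h_bound (n : ℕ) (hn : 2 ≤ n) : ∫⁻ x, F n x ∂μ ≤ loopTC K / ENNReal.ofReal Real.pi := by
    refine (lintegral_turnCount_inner_le measurePreserving_cond_ball (sample K n) n).trans ?_
    rw [measure_univ, mul_one, ENNReal.ofReal_div_of_pos Real.pi_pos]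
    gcongr
    exact ofReal_cyclicTurning_sample_le_loopTC hK hn
  have h_liminf : ∫⁻ x, liminf (fun n => F n x) atTop ∂μ < k := by
    calc ∫⁻ x, liminf (fun n => F n x) atTop ∂μ
        ≤ liminf (fun n => ∫⁻ x, F n x ∂μ) atTop := lintegral_liminf_le hF
      _ ≤ loopTC K / ENNReal.ofReal Real.pi :=
        liminf_le_of_frequently_le' ((eventually_ge_atTop 2).mono h_bound).frequently
      _ < k := by
        rw [ENNReal.div_lt_iff (by simp [Real.pi_pos]) (by simp)]
        simpa [ENNReal.ofReal_mul] using hTC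
  obtain ⟨x, hx, hx_le⟩ := exists_notMem_null_le_lintegral (Measurable.liminf hF).aemeasurable
    (ProbabilityTheory.cond_absolutelyContinuous (μ := volume) (s := Metric.ball 0 1) hp)
  refine ⟨x, not_not.1 hx, ?_⟩
  have h_frequently := frequently_lt_of_liminf_lt (by isBoundedDefault) (hx_le.trans_lt h_liminf)
  exact h_frequently.mono fun n hn => Nat.cast_lt.1 hn

theorem ae_inner_ne_zero {a : E} (ha : a ≠ 0) : ∀ᵐ x : E, ⟪a, x⟫ ≠ 0 := by
  have h_proper : (ℝ ∙ a)ᗮ ≠ ⊤ := by simpa using ha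
  filter_upwards [measure_eq_zero_iff_ae_notMem.1 (Measure.addHaar_submodule volume _ h_proper)]
    with x hx
  rwa [SetLike.mem_coe, Submodule.mem_orthogonal_singleton_iff_inner_right] at hx

theorem ae_injOn_inner {ι : Type*} {K : ι → E} (hK : Function.Injective K) {C : Set ι}
    (hC : C.Countable) : ∀ᵐ x : E, InjOn (fun i => ⟪K i, x⟫) C := by
  simp only [InjOn, ae_ball_iff hC]
  intro i _ j _
  by_cases hij : i = j
  · simp [hij]
  filter_upwards [ae_inner_ne_zero (sub_ne_zero.2 (hK.ne hij))] with x hx h_eq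
  rw [inner_sub_left, sub_ne_zero] at hx
  exact absurd h_eq hx

end TurnCount

section TurningPoints

variable {g : ℕ → ℝ}

theorem exists_turn_at_max (hg : ∀ i, g (i + 1) ≠ g i) {p q r : ℕ} (hpq : p ≤ q) (hqr : q ≤ r)
    (hp : g p < g q) (hr : g r < g q) :
    ∃ i, p ≤ i ∧ i + 1 < r ∧ (∀ j ∈ Icc p r, g j ≤ g (i + 1)) ∧
      (g (i + 1) - g i) * (g (i + 2) - g (i + 1)) < 0 := by
  obtain ⟨m, ⟨hpm, hmr⟩, h_max⟩ := exists_max_image (Icc p r) g (finite_Icc p r) ⟨q, hpq, hqr⟩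
  have hq_le : g q ≤ g m := h_max q ⟨hpq, hqr⟩
  have hpm' : p < m := hpm.lt_of_ne (by rintro rfl; order)
  have hmr' : m < r := hmr.lt_of_ne (by rintro rfl; order)
  obtain ⟨i, rfl⟩ := Nat.exists_eq_add_of_le' (Nat.one_le_of_lt hpm')
  refine ⟨i, by omega, hmr', h_max, mul_neg_of_pos_of_neg (sub_pos.2 ?_) (sub_neg.2 ?_)⟩
  · exact (h_max i ⟨by omega, by omega⟩).lt_of_ne (hg i).symm
  · exact (h_max (i + 2) ⟨by omega, by omega⟩).lt_of_ne (hg (i + 1))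

theorem exists_turn_at_min (hg : ∀ i, g (i + 1) ≠ g i) {p q r : ℕ} (hpq : p ≤ q) (hqr : q ≤ r)
    (hp : g q < g p) (hr : g q < g r) :
    ∃ i, p ≤ i ∧ i + 1 < r ∧ (g (i + 1) - g i) * (g (i + 2) - g (i + 1)) < 0 := by
  obtain ⟨i, hpi, hir, -, h_turn⟩ := exists_turn_at_max (g := -g) (fun i => neg_injective.ne (hg i))
    hpq hqr (neg_lt_neg hp) (neg_lt_neg hr)
  simp only [Pi.neg_apply] at h_turn
  exact ⟨i, hpi, hir, by linarith⟩

theorem turnCount_eq_card_filter_Ico {n : ℕ} (hper : Function.Periodic g n) (m : ℕ) :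
    turnCount g n =
      Finset.card {i ∈ Finset.Ico m (m + n) | (g (i + 1) - g i) * (g (i + 2) - g (i + 1)) < 0} := by
  rw [turnCount, ← Nat.count_eq_card_filter_range]
  refine (Nat.filter_Ico_card_eq_of_periodic m n _ fun i => ?_).symm
  simp only [add_right_comm i n, hper _]

theorem four_le_turnCount (hg : ∀ i, g (i + 1) ≠ g i) {n : ℕ} (hper : Function.Periodic g n)
    {a b c d : ℕ} (hab : a < b) (hbc : b < c) (hcd : c < d) (hda : d < a + n)
    (hab' : g a < g b) (hcb : g c < g b) (hcd' : g c < g d) (had : g a < g d) :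
    4 ≤ turnCount g n := by
  obtain ⟨i₁, hai, hic, h_max₁, h_turn₁⟩ := exists_turn_at_max hg hab.le hbc.le hab' hcb
  obtain ⟨i₃, hci, hia, h_max₃, h_turn₃⟩ :=
    exists_turn_at_max hg hcd.le hda.le hcd' ((hper a).trans_lt had)
  have hb_le := h_max₁ b ⟨hab.le, hbc.le⟩
  have hd_le := h_max₃ d ⟨hcd.le, hda.le⟩
  obtain ⟨i₂, h₁₂, h₂₃, h_turn₂⟩ := exists_turn_at_min hg hic.le (hci.trans (Nat.le_succ _))
    (hcb.trans_le hb_le) (hcd'.trans_le hd_le)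
  obtain ⟨i₄, h₃₄, h₄₁, h_turn₄⟩ := exists_turn_at_min hg (r := i₁ + 1 + n) hia.le (by omega)
    ((hper a).trans_lt (had.trans_le hd_le))
    (by rw [hper a, hper (i₁ + 1)]; exact hab'.trans_le hb_le)
  rw [turnCount_eq_card_filter_Ico hper i₁]
  calc 4 = Finset.card {i₁, i₂, i₃, i₄} := by
        repeat rw [Finset.card_insert_of_notMem (by simp; omega)]
        rfl
    _ ≤ _ := Finset.card_le_card fun i hi => by
        simp only [Finset.mem_insert, Finset.mem_singleton] at hi
        rw [Finset.mem_filter, Finset.mem_Ico]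
        rcases hi with rfl | rfl | rfl | rfl
        exacts [⟨by omega, h_turn₁⟩, ⟨by omega, h_turn₂⟩, ⟨by omega, h_turn₃⟩, ⟨by omega, h_turn₄⟩]

end TurningPoints

section Unimodal

/-- The function `f` on the circle has at least two separate peaks: going once around, it takes
values low at `a`, high at `b`, low at `c` and high at `d`. Taking `0 ≤ a` loses nothing by
periodicity. -/
def HasTwoPeaks (f : AddCircle (1 : ℝ) → ℝ) : Prop :=
  ∃ a b c d : ℝ, 0 ≤ a ∧ a < b ∧ b < c ∧ c < d ∧ d < a + 1 ∧
    f a < f b ∧ f c < f b ∧ f c < f d ∧ f a < f d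

/-- The function `f` on the circle has a single peak: it increases strictly from its minimum at `s`
to its maximum at `p` and then decreases strictly until it is back at `s + 1`. -/
structure StrictUnimodal (f : AddCircle (1 : ℝ) → ℝ) (s p : ℝ) : Prop where
  lt : s < p
  lt_add_one : p < s + 1
  strictMonoOn : StrictMonoOn (fun t : ℝ => f t) (Icc s p)
  strictAntiOn : StrictAntiOn (fun t : ℝ => f t) (Icc p (s + 1))

variable {f : AddCircle (1 : ℝ) → ℝ}

theorem tendsto_sample_ceil (hf : Continuous f) {t : ℝ} (ht : 0 ≤ t) :
    Tendsto (fun n : ℕ => sample f n ⌈t * n⌉₊) atTop (𝓝 (f t)) :=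
  ((hf.comp (AddCircle.continuous_mk' 1)).tendsto t).comp
    ((tendsto_nat_ceil_mul_div_atTop ht).comp tendsto_natCast_atTop_atTop)

theorem eventually_ceil_lt {s t : ℝ} (hs : 0 ≤ s) (hst : s < t) :
    ∀ᶠ n : ℕ in atTop, ⌈s * n⌉₊ < ⌈t * n⌉₊ := by
  have h_lim {t : ℝ} (ht : 0 ≤ t) : Tendsto (fun n : ℕ => (⌈t * n⌉₊ / n : ℝ)) atTop (𝓝 t) :=
    (tendsto_nat_ceil_mul_div_atTop ht).comp tendsto_natCast_atTop_atTop
  filter_upwards [(h_lim hs).eventually_lt (h_lim (hs.trans hst.le)) hst] with n hn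
  exact lt_of_not_ge fun h => hn.not_ge (by gcongr)

theorem HasTwoPeaks.eventually_four_le_turnCount (h : HasTwoPeaks f) (hf : Continuous f)
    (hinj : InjOn f (range fun q : ℚ => ((q : ℝ) : AddCircle (1 : ℝ)))) :
    ∀ᶠ n in atTop, 4 ≤ turnCount (sample f n) n := by
  obtain ⟨a, b, c, d, ha, hab, hbc, hcd, hda, hab', hcb, hcd', had⟩ := h
  have hb := ha.trans hab.le
  have hc := hb.trans hbc.le
  have hd := hc.trans hcd.le
  filter_upwards [eventually_ceil_lt ha hab, eventually_ceil_lt hb hbc, eventually_ceil_lt hc hcd,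
    eventually_ceil_lt hd hda,
    (tendsto_sample_ceil hf ha).eventually_lt (tendsto_sample_ceil hf hb) hab',
    (tendsto_sample_ceil hf hc).eventually_lt (tendsto_sample_ceil hf hb) hcb,
    (tendsto_sample_ceil hf hc).eventually_lt (tendsto_sample_ceil hf hd) hcd',
    (tendsto_sample_ceil hf ha).eventually_lt (tendsto_sample_ceil hf hd) had,
    eventually_ge_atTop 2] with n hn₁ hn₂ hn₃ hn₄ hn₅ hn₆ hn₇ hn₈ hn
  have h_wrap : ⌈(a + 1) * n⌉₊ = ⌈a * n⌉₊ + n := by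
    rw [add_one_mul, Nat.ceil_add_natCast (by positivity)]
  have h_rational (i : ℕ) : ((i / n : ℝ) : AddCircle (1 : ℝ)) ∈
      range fun q : ℚ => ((q : ℝ) : AddCircle (1 : ℝ)) := ⟨i / n, by push_cast; rfl⟩
  exact four_le_turnCount
    (fun i => hinj.ne (h_rational _) (h_rational _) (coe_succ_div_ne hn i))
    (sample_add_self (by omega)) hn₁ hn₂ hn₃ (h_wrap ▸ hn₄) hn₅ hn₆ hn₇ hn₈

theorem strictMonoOn_of_dense_injOn {g : ℝ → ℝ} {I D : Set ℝ} (hg : MonotoneOn g I)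
    (hI : I.OrdConnected) (hD : Dense D) (hinj : InjOn g (D ∩ I)) : StrictMonoOn g I := by
  intro x hx y hy hxy
  obtain ⟨u, huD, hxu, huy⟩ := hD.exists_between hxy
  obtain ⟨v, hvD, huv, hvy⟩ := hD.exists_between huy
  have hu : u ∈ I := hI.out hx hy ⟨hxu.le, huy.le⟩
  have hv : v ∈ I := hI.out hx hy ⟨(hxu.trans huv).le, hvy.le⟩
  calc g x ≤ g u := hg hx hu hxu.le
    _ < g v := (hg hu hv huv.le).lt_of_ne (hinj.ne ⟨huD, hu⟩ ⟨hvD, hv⟩ huv.ne)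
    _ ≤ g y := hg hv hy hvy.le

theorem exists_isLeast_isGreatest (hf : Continuous f) : ∃ s p : ℝ, 0 ≤ s ∧ p ∈ Ico s (s + 1) ∧
    ∀ θ, f s ≤ f θ ∧ f θ ≤ f p := by
  obtain ⟨σ, -, hσ⟩ := isCompact_univ.exists_isMinOn univ_nonempty hf.continuousOn
  obtain ⟨π, -, hπ⟩ := isCompact_univ.exists_isMaxOn univ_nonempty hf.continuousOn
  obtain ⟨s, hs, rfl⟩ := (AddCircle.coe_image_Ico_eq (1 : ℝ) 0).ge (mem_univ σ)
  obtain ⟨p, hp, rfl⟩ := (AddCircle.coe_image_Ico_eq (1 : ℝ) s).ge (mem_univ π)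
  exact ⟨s, p, hs.1, hp, fun θ => ⟨hσ (mem_univ θ), hπ (mem_univ θ)⟩⟩

theorem monotoneOn_of_not_hasTwoPeaks (h : ¬HasTwoPeaks f) {s p : ℝ} (hs : 0 ≤ s)
    (hps : p < s + 1) (h_lt : f s < f p) (h_range : ∀ θ, f s ≤ f θ ∧ f θ ≤ f p) :
    MonotoneOn (fun t : ℝ => f t) (Icc s p) := by
  rintro x ⟨hsx, hxp⟩ y ⟨hsy, hyp⟩ hxy
  by_contra! hyx
  have hsx' : f s < f x := (h_range y).1.trans_lt hyx
  have hyp' : f y < f p := hyx.trans_le (h_range x).2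
  refine h ⟨s, x, y, p, hs, hsx.lt_of_ne ?_, hxy.lt_of_ne ?_, hyp.lt_of_ne ?_, hps, hsx', hyx,
    hyp', h_lt⟩ <;> rintro rfl <;> order

theorem antitoneOn_of_not_hasTwoPeaks (h : ¬HasTwoPeaks f) {s p : ℝ} (hs : 0 ≤ s)
    (hsp : s < p) (h_lt : f s < f p) (h_range : ∀ θ, f s ≤ f θ ∧ f θ ≤ f p) :
    AntitoneOn (fun t : ℝ => f t) (Icc p (s + 1)) := by
  have h_wrap : f (s + 1 : ℝ) = f s := congrArg f (AddCircle.coe_add_period 1 s)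
  rintro x ⟨hpx, hxs⟩ y ⟨hpy, hys⟩ hxy
  by_contra! hyx
  have hxp' : f x < f p := hyx.trans_le (h_range y).2
  have hsy' : f s < f y := (h_range x).1.trans_lt hyx
  refine h ⟨s, p, x, y, hs, hsp, hpx.lt_of_ne ?_, hxy.lt_of_ne ?_, hys.lt_of_ne ?_,
    h_lt, hxp', hyx, hsy'⟩ <;> rintro rfl <;> order

theorem exists_strictUnimodal_of_not_hasTwoPeaks (hf : Continuous f) {D : Set ℝ} (hD : Dense D)
    (hinj : InjOn f ((↑) '' D)) (h : ¬HasTwoPeaks f) : ∃ s p, StrictUnimodal f s p := by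
  obtain ⟨s, p, hs, ⟨hsp, hps⟩, h_range⟩ := exists_isLeast_isGreatest hf
  have hinj_lift {a : ℝ} {I : Set ℝ} (hI : I ⊆ Ico a (a + 1)) : InjOn (fun t : ℝ => f t) (D ∩ I) :=
    fun x hx y hy hxy => (AddCircle.coe_eq_coe_iff_of_mem_Ico (hI hx.2) (hI hy.2)).1
      (hinj (mem_image_of_mem _ hx.1) (mem_image_of_mem _ hy.1) hxy)
  have h_lt : f s < f p := by
    obtain ⟨u, huD, hsu, hus⟩ := hD.exists_between (lt_add_one s)
    obtain ⟨v, hvD, huv, hvs⟩ := hD.exists_between hus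
    have huv' := (hinj_lift (subset_refl (Ico s (s + 1)))).ne ⟨huD, hsu.le, hus⟩
      ⟨hvD, (hsu.trans huv).le, hvs⟩ huv.ne
    by_contra! hps'
    exact huv' (le_antisymm ((h_range u).2.trans (hps'.trans (h_range v).1))
      ((h_range v).2.trans (hps'.trans (h_range u).1)))
  have hsp' : s < p := hsp.lt_of_ne (by rintro rfl; order)
  have h_mono := monotoneOn_of_not_hasTwoPeaks h hs hps h_lt h_range
  have h_anti := antitoneOn_of_not_hasTwoPeaks h hs hsp' h_lt h_range
  refine ⟨s, p, hsp', hps, strictMonoOn_of_dense_injOn h_mono ordConnected_Icc hD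
    (hinj_lift (a := s) (Icc_subset_Ico_right hps)), fun x hx y hy hxy => ?_⟩
  exact neg_lt_neg_iff.1 (strictMonoOn_of_dense_injOn h_anti.neg ordConnected_Icc hD
    (neg_injective.comp_injOn (hinj_lift (a := p) (Icc_subset_Ico_right (by linarith)))) hx hy hxy)

theorem StrictUnimodal.neg {s p : ℝ} (h : StrictUnimodal f s p) :
    StrictUnimodal (-f) p (s + 1) where
  lt := h.lt_add_one
  lt_add_one := by simpa using h.lt
  strictMonoOn := h.strictAntiOn.neg
  strictAntiOn x hx y hy hxy := by
    have h_shift (t : ℝ) : f (t - 1 : ℝ) = f t := by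
      rw [AddCircle.coe_sub, AddCircle.coe_period, sub_zero]
    have h_lt := h.strictMonoOn (a := x - 1) (b := y - 1) ⟨by linarith [hx.1], by linarith [hx.2]⟩
      ⟨by linarith [hy.1], by linarith [hy.2]⟩ (by linarith)
    simp only [h_shift] at h_lt
    exact neg_lt_neg h_lt

end Unimodal

section AmbientIsotopy

variable {X Y V : Type*} [TopologicalSpace X] [TopologicalSpace Y]

/-- Ambient isotopy of subsets of `X`, encoded as in `Unknotted`: only the times in `[0, 1]` of the
family `H` matter. -/
def AmbientIsotopic (A B : Set X) : Prop :=
  ∃ H : ℝ × X → X, ContinuousOn H (Icc (0 : ℝ) 1 ×ˢ univ) ∧ (∀ x, H (0, x) = x) ∧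
    (∀ t ∈ Icc (0 : ℝ) 1, IsHomeomorph fun x => H (t, x)) ∧ (fun x => H (1, x)) '' A = B

namespace AmbientIsotopic

theorem trans {A B C : Set X} (hAB : AmbientIsotopic A B) (hBC : AmbientIsotopic B C) :
    AmbientIsotopic A C := by
  obtain ⟨H, hH, hH₀, hH_homeo, rfl⟩ := hAB
  obtain ⟨G, hG, hG₀, hG_homeo, rfl⟩ := hBC
  refine ⟨fun q => G (q.1, H q),
    hG.comp (continuousOn_fst.prodMk hH) fun q hq => ⟨hq.1, mem_univ _⟩,
    fun x => by simp only [hH₀, hG₀], fun t ht => (hG_homeo t ht).comp (hH_homeo t ht), ?_⟩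
  rw [image_image]

theorem of_image (e : X ≃ₜ Y) {A B : Set X} (h : AmbientIsotopic (e '' A) (e '' B)) :
    AmbientIsotopic A B := by
  obtain ⟨H, hH, hH₀, hH_homeo, hH₁⟩ := h
  refine ⟨fun q => e.symm (H (q.1, e q.2)), e.symm.continuous.comp_continuousOn
      (hH.comp (by fun_prop) fun q hq => ⟨hq.1, mem_univ _⟩),
    fun x => by simp only [hH₀, e.symm_apply_apply],
    fun t ht => e.symm.isHomeomorph.comp ((hH_homeo t ht).comp e.isHomeomorph), ?_⟩
  have h_symm : e.symm '' (e '' B) = B := e.toEquiv.symm_image_image B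
  rw [← h_symm, ← hH₁, image_image, image_image]

theorem of_leftInverse {H G : ℝ × X → X} (hH : ContinuousOn H (Icc (0 : ℝ) 1 ×ˢ univ))
    (hG : ContinuousOn G (Icc (0 : ℝ) 1 ×ˢ univ)) (hH₀ : ∀ x, H (0, x) = x)
    (hGH : ∀ t ∈ Icc (0 : ℝ) 1, ∀ x, G (t, H (t, x)) = x)
    (hHG : ∀ t ∈ Icc (0 : ℝ) 1, ∀ x, H (t, G (t, x)) = x) (A : Set X) :
    AmbientIsotopic A ((fun x => H (1, x)) '' A) := by
  have h_slice {F : ℝ × X → X} (hF : ContinuousOn F (Icc (0 : ℝ) 1 ×ˢ univ)) (t : ℝ)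
      (ht : t ∈ Icc (0 : ℝ) 1) : Continuous fun x => F (t, x) :=
    hF.comp_continuous (by fun_prop) fun x => ⟨ht, mem_univ x⟩
  exact ⟨H, hH, hH₀, fun t ht => isHomeomorph_iff_exists_inverse.2
    ⟨h_slice hH t ht, fun x => G (t, x), hGH t ht, hHG t ht, h_slice hG t ht⟩, rfl⟩

theorem union_graphOn [TopologicalSpace V] {F G : ℝ → Y → V → V}
    (hF : ContinuousOn (fun q : ℝ × Y × V => F q.1 q.2.1 q.2.2) (Icc 0 1 ×ˢ univ))
    (hG : ContinuousOn (fun q : ℝ × Y × V => G q.1 q.2.1 q.2.2) (Icc 0 1 ×ˢ univ))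
    (hF₀ : ∀ y v, F 0 y v = v)
    (hGF : ∀ t ∈ Icc (0 : ℝ) 1, ∀ y, Function.LeftInverse (G t y) (F t y))
    (hFG : ∀ t ∈ Icc (0 : ℝ) 1, ∀ y, Function.RightInverse (G t y) (F t y))
    (s : Set Y) (a b : Y → V) :
    AmbientIsotopic (s.graphOn a ∪ s.graphOn b)
      (s.graphOn (fun y => F 1 y (a y)) ∪ s.graphOn (fun y => F 1 y (b y))) := by
  convert of_leftInverse (H := fun q : ℝ × Y × V => (q.2.1, F q.1 q.2.1 q.2.2))
    (G := fun q : ℝ × Y × V => (q.2.1, G q.1 q.2.1 q.2.2)) (by fun_prop) (by fun_prop)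
    (fun x => by rw [hF₀]) (fun t ht x => by rw [hGF t ht x.1 x.2])
    (fun t ht x => by rw [hFG t ht x.1 x.2]) (s.graphOn a ∪ s.graphOn b) using 1
  simp only [graphOn, image_union, image_image]

theorem shear [TopologicalSpace V] {L : V → ℝ} (hL : Continuous L) {q : ℝ} (hq : 0 < q)
    (A : Set (ℝ × V)) : AmbientIsotopic A ((fun x => (L x.2 + q * x.1, x.2)) '' A) := by
  have h_pos {t : ℝ} (ht : t ∈ Icc (0 : ℝ) 1) : 0 < 1 - t + t * q := by
    have := convex_Ioi (0 : ℝ) (mem_Ioi.2 one_pos) (mem_Ioi.2 hq) (sub_nonneg.2 ht.2) ht.1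
      (sub_add_cancel 1 t)
    simpa using this
  convert of_leftInverse
    (H := fun z : ℝ × ℝ × V => ((1 - z.1) * z.2.1 + z.1 * (L z.2.2 + q * z.2.1), z.2.2))
    (G := fun z : ℝ × ℝ × V => ((z.2.1 - z.1 * L z.2.2) / (1 - z.1 + z.1 * q), z.2.2))
    (by fun_prop) ?_ (fun x => ?_) (fun t ht x => ?_) (fun t ht x => ?_) A using 3 with x
  · ring
  · exact (ContinuousOn.div (by fun_prop) (by fun_prop) fun z hz => (h_pos hz.1).ne').prodMk
      (by fun_prop)
  · simp
  · have := (h_pos ht).ne'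
    ext1
    · simp only
      rw [div_eq_iff this]
      ring
    · rfl
  · have := (h_pos ht).ne'
    ext1
    · simp only
      field_simp
      ring
    · rfl

end AmbientIsotopic

theorem continuousOn_of_norm_sub_le {τ : Type*} [TopologicalSpace τ] [NormedAddCommGroup V]
    {T : Set τ} {U : Set Y} (hU : IsOpen U) {F : τ → Y → V → V}
    (hF : ContinuousOn (fun q : τ × Y × V => F q.1 q.2.1 q.2.2) (T ×ˢ U ×ˢ univ))
    {β : Y → ℝ} (hβ : Continuous β) (hβ₀ : ∀ y ∉ U, β y = 0)
    (hle : ∀ t ∈ T, ∀ y v, ‖F t y v - v‖ ≤ β y) :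
    ContinuousOn (fun q : τ × Y × V => F q.1 q.2.1 q.2.2) (T ×ˢ univ) := by
  rintro ⟨t, y, v⟩ ⟨ht, -⟩
  by_cases hy : y ∈ U
  · have hU' : univ ×ˢ U ×ˢ univ ∈ 𝓝 (t, y, v) :=
      (isOpen_univ.prod (hU.prod isOpen_univ)).mem_nhds ⟨mem_univ t, hy, mem_univ v⟩
    refine (hF (t, y, v) ⟨ht, hy, mem_univ v⟩).mono_of_mem_nhdsWithin ?_
    filter_upwards [self_mem_nhdsWithin, mem_nhdsWithin_of_mem_nhds hU'] with q hqT hqU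
    exact ⟨hqT.1, hqU.2⟩
  · have h_fix : F t y v = v :=
      sub_eq_zero.1 (norm_le_zero_iff.1 ((hle t ht y v).trans_eq (hβ₀ y hy)))
    have h_snd : Tendsto (fun q : τ × Y × V => q.2.2) (𝓝[T ×ˢ univ] (t, y, v)) (𝓝 v) :=
      ContinuousAt.continuousWithinAt (f := fun q : τ × Y × V => q.2.2) (by fun_prop)
    have h_diff : Tendsto (fun q : τ × Y × V => F q.1 q.2.1 q.2.2 - q.2.2)
        (𝓝[T ×ˢ univ] (t, y, v)) (𝓝 0) := by
      refine squeeze_zero_norm' (a := fun q => β q.2.1) ?_ ?_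
      · filter_upwards [self_mem_nhdsWithin] with q hq using hle q.1 hq.1 q.2.1 q.2.2
      · rw [← hβ₀ y hy]
        exact ContinuousAt.continuousWithinAt (f := fun q : τ × Y × V => β q.2.1) (by fun_prop)
    simpa only [ContinuousWithinAt, h_fix, sub_add_cancel, zero_add] using h_diff.add h_snd

end AmbientIsotopy

section TwistStretch

/-- Rotation of the disc of radius `r` by the angle `θ`, damped linearly to the identity between the
radii `r` and `2 * r`. For `r = 0` it is the identity, because then `(2 * r - ‖w‖) / r = 0`. -/
noncomputable def twist (r θ : ℝ) (w : ℂ) : ℂ :=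
  Complex.exp (↑(θ * max 0 (min 1 ((2 * r - ‖w‖) / r))) * Complex.I) * w

theorem norm_twist (r θ : ℝ) (w : ℂ) : ‖twist r θ w‖ = ‖w‖ := by
  rw [twist, norm_mul, Complex.norm_exp_ofReal_mul_I, one_mul]

theorem twist_zero_right (r : ℝ) (w : ℂ) : twist r 0 w = w := by
  simp [twist]

theorem twist_neg (r θ : ℝ) (w : ℂ) : twist r θ (-w) = -twist r θ w := by
  simp only [twist, norm_neg, mul_neg]

theorem twist_neg_twist (r θ : ℝ) (w : ℂ) : twist r (-θ) (twist r θ w) = w := by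
  rw [twist, norm_twist, twist, ← mul_assoc, ← Complex.exp_add, ← add_mul, ← Complex.ofReal_add,
    ← add_mul, neg_add_cancel]
  simp

theorem twist_of_norm_eq {r : ℝ} (hr : r ≠ 0) (θ : ℝ) {w : ℂ} (hw : ‖w‖ = r) :
    twist r θ w = Complex.exp (θ * Complex.I) * w := by
  have h_cutoff : (2 * r - ‖w‖) / r = 1 := by rw [hw]; field_simp; ring
  rw [twist, h_cutoff, min_self, max_eq_right zero_le_one, mul_one]

theorem continuousOn_twist {X : Type*} [TopologicalSpace X] {S : Set X} {r θ : X → ℝ} {w : X → ℂ}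
    (hr : ContinuousOn r S) (hr₀ : ∀ x ∈ S, r x ≠ 0) (hθ : ContinuousOn θ S)
    (hw : ContinuousOn w S) : ContinuousOn (fun x => twist (r x) (θ x) (w x)) S := by
  have : ContinuousOn (fun x => (2 * r x - ‖w x‖) / r x) S :=
    ContinuousOn.div (by fun_prop) hr hr₀
  simp only [twist]
  fun_prop

theorem norm_twist_sub_le {r : ℝ} (hr : 0 ≤ r) (θ : ℝ) (w : ℂ) : ‖twist r θ w - w‖ ≤ 4 * r := by
  rcases le_total (2 * r) ‖w‖ with hw | hw
  · have h_cutoff : (2 * r - ‖w‖) / r ≤ 0 := div_nonpos_of_nonpos_of_nonneg (by linarith) hr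
    rw [twist, max_eq_left ((min_le_right _ _).trans h_cutoff)]
    simpa using hr
  · calc ‖twist r θ w - w‖ ≤ ‖twist r θ w‖ + ‖w‖ := norm_sub_le _ _
      _ ≤ 4 * r := by rw [norm_twist]; linarith

variable {V : Type*} [NormedAddCommGroup V] [NormedSpace ℝ V]

/-- The radial map of `V` that scales the ball of radius `r` to the ball of radius `s` and moves all
points outside it radially by `s - r`. -/
noncomputable def stretch (r s : ℝ) (v : V) : V :=
  (1 + (s - r) / max r ‖v‖) • v

theorem stretch_self (r : ℝ) (v : V) : stretch r r v = v := by
  simp [stretch]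

theorem stretch_neg (r s : ℝ) (v : V) : stretch r s (-v) = -stretch r s v := by
  simp only [stretch, norm_neg, smul_neg]

theorem stretch_of_norm_eq {r : ℝ} (hr : r ≠ 0) (s : ℝ) {v : V} (hv : ‖v‖ = r) :
    stretch r s v = (s / r) • v := by
  rw [stretch, hv, max_self, sub_div, div_self hr, add_sub_cancel]

theorem continuousOn_stretch {X : Type*} [TopologicalSpace X] {S : Set X} {r s : X → ℝ} {v : X → V}
    (hr : ContinuousOn r S) (hr₀ : ∀ x ∈ S, 0 < r x) (hs : ContinuousOn s S)
    (hv : ContinuousOn v S) : ContinuousOn (fun x => stretch (r x) (s x) (v x)) S := by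
  have h_scale : ContinuousOn (fun x => (s x - r x) / max (r x) ‖v x‖) S :=
    ContinuousOn.div (by fun_prop) (by fun_prop) fun x hx => (lt_max_of_lt_left (hr₀ x hx)).ne'
  simp only [stretch]
  fun_prop

theorem norm_stretch_sub_le (r s : ℝ) (v : V) : ‖stretch r s v - v‖ ≤ |s - r| := by
  rw [stretch, add_smul, one_smul, add_sub_cancel_left, norm_smul, norm_div, Real.norm_eq_abs,
    div_mul_eq_mul_div]
  refine div_le_of_le_mul₀ (norm_nonneg _) (abs_nonneg _) ?_
  gcongr
  exact (le_max_right _ _).trans (le_abs_self _)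

theorem stretch_stretch {r s : ℝ} (hr : 0 < r) (hs : 0 < s) (v : V) :
    stretch s r (stretch r s v) = v := by
  rcases le_total ‖v‖ r with hv | hv
  · have h_inner : stretch r s v = (s / r) • v := by
      rw [stretch, max_eq_left hv, sub_div, div_self hr.ne', add_sub_cancel]
    have h_norm : ‖(s / r) • v‖ ≤ s := by
      rw [norm_smul, Real.norm_of_nonneg (by positivity), div_mul_eq_mul_div]
      exact div_le_of_le_mul₀ hr.le hs.le (by gcongr)
    rw [h_inner, stretch, max_eq_left h_norm, smul_smul]
    convert one_smul ℝ v using 2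
    field_simp
    ring
  · have hv₀ : 0 < ‖v‖ := hr.trans_le hv
    have h_outer : stretch r s v = ((‖v‖ + (s - r)) / ‖v‖) • v := by
      rw [stretch, max_eq_right hv, add_div, div_self hv₀.ne']
    have h_pos : 0 < ‖v‖ + (s - r) := by linarith
    have h_norm : ‖((‖v‖ + (s - r)) / ‖v‖) • v‖ = ‖v‖ + (s - r) := by
      rw [norm_smul, Real.norm_of_nonneg (by positivity), div_mul_cancel₀ _ hv₀.ne']
    rw [h_outer, stretch, h_norm, max_eq_right (by linarith), smul_smul]
    convert one_smul ℝ v using 2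
    field_simp
    ring

end TwistStretch

section GraphIsotopy

variable {Y V : Type*} [TopologicalSpace Y]

theorem ambientIsotopic_graphOn_translate [AddCommGroup V] [Module ℝ V] [TopologicalSpace V]
    [ContinuousAdd V] [ContinuousSub V] [ContinuousSMul ℝ V] {m : Y → V} (hm : Continuous m)
    (s : Set Y) (a b : Y → V) :
    AmbientIsotopic (s.graphOn a ∪ s.graphOn b)
      (s.graphOn (fun y => a y - m y) ∪ s.graphOn (fun y => b y - m y)) := by
  convert AmbientIsotopic.union_graphOn (F := fun t y v => v - t • m y)
    (G := fun t y v => v + t • m y) (by fun_prop) (by fun_prop) (fun y v => by module)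
    (fun t _ y v => by module) (fun t _ y v => by module) s a b using 4 <;> simp

theorem ambientIsotopic_graphOn_twist {U : Set Y} (hU : IsOpen U) {r θ : Y → ℝ}
    (hr : Continuous r) (hr₀ : ∀ y, 0 ≤ r y) (hrU : ∀ y, r y ≠ 0 ↔ y ∈ U) (hθ : ContinuousOn θ U)
    (s : Set Y) (a b : Y → ℂ) :
    AmbientIsotopic (s.graphOn a ∪ s.graphOn b)
      (s.graphOn (fun y => twist (r y) (θ y) (a y)) ∪
        s.graphOn (fun y => twist (r y) (θ y) (b y))) := by
  have h_cont {σ : ℝ → ℝ} (hσ : Continuous σ) : ContinuousOn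
      (fun q : ℝ × Y × ℂ => twist (r q.2.1) (σ q.1 * θ q.2.1) q.2.2) (Icc 0 1 ×ˢ univ) := by
    have hθ' : ContinuousOn (fun q : ℝ × Y × ℂ => θ q.2.1) (Icc 0 1 ×ˢ U ×ˢ univ) :=
      hθ.comp (by fun_prop) fun q hq => hq.2.1
    exact continuousOn_of_norm_sub_le (β := fun y => 4 * r y)
      (F := fun t y w => twist (r y) (σ t * θ y) w) hU
      (continuousOn_twist (by fun_prop) (fun q hq => (hrU _).2 hq.2.1)
        (ContinuousOn.mul (by fun_prop) hθ') (by fun_prop))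
      (by fun_prop) (fun y hy => by rw [not_not.1 (mt (hrU y).1 hy), mul_zero])
      fun t _ y w => norm_twist_sub_le (hr₀ y) _ w
  simpa only [one_mul] using AmbientIsotopic.union_graphOn (F := fun t y => twist (r y) (t * θ y))
    (G := fun t y => twist (r y) (-t * θ y)) (h_cont (σ := fun t => t) continuous_id)
    (h_cont (σ := fun t => -t) continuous_neg)
    (fun y w => by rw [zero_mul, twist_zero_right])
    (fun t _ y w => by rw [neg_mul, twist_neg_twist])
    (fun t _ y w => by simpa only [neg_mul, neg_neg] using twist_neg_twist (r y) (-t * θ y) w) s a b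

theorem ambientIsotopic_graphOn_stretch [NormedAddCommGroup V] [NormedSpace ℝ V] {U : Set Y}
    (hU : IsOpen U) {r ρ : Y → ℝ} (hr : Continuous r) (hρ : Continuous ρ)
    (hrU : ∀ y ∈ U, 0 < r y) (hρU : ∀ y ∈ U, 0 < ρ y) (hU₀ : ∀ y ∉ U, r y = ρ y)
    (s : Set Y) (a b : Y → V) :
    AmbientIsotopic (s.graphOn a ∪ s.graphOn b)
      (s.graphOn (fun y => stretch (r y) (ρ y) (a y)) ∪
        s.graphOn (fun y => stretch (r y) (ρ y) (b y))) := by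
  let R (t : ℝ) (y : Y) : ℝ := (1 - t) * r y + t * ρ y
  have hR_pos {t : ℝ} (ht : t ∈ Icc (0 : ℝ) 1) {y : Y} (hy : y ∈ U) : 0 < R t y :=
    convex_Ioi (0 : ℝ) (mem_Ioi.2 (hrU y hy)) (mem_Ioi.2 (hρU y hy)) (sub_nonneg.2 ht.2) ht.1
      (sub_add_cancel 1 t)
  have hR_fix (t : ℝ) {y : Y} (hy : y ∉ U) : R t y = r y := by
    simp only [R, ← hU₀ y hy]
    ring
  have hR_sub_le {t : ℝ} (ht : t ∈ Icc (0 : ℝ) 1) (y : Y) : |R t y - r y| ≤ |ρ y - r y| := by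
    rw [show R t y - r y = t * (ρ y - r y) by simp only [R]; ring, abs_mul, abs_of_nonneg ht.1]
    exact mul_le_of_le_one_left (abs_nonneg _) ht.2
  have hR_cont : Continuous fun q : ℝ × Y × V => R q.1 q.2.1 := by fun_prop
  have h_inv {r₁ r₂ : ℝ} (y : Y) (h_pos : y ∈ U → 0 < r₁ ∧ 0 < r₂) (h_eq : y ∉ U → r₁ = r₂)
      (v : V) : stretch r₂ r₁ (stretch r₁ r₂ v) = v := by
    by_cases hy : y ∈ U
    · exact stretch_stretch (h_pos hy).1 (h_pos hy).2 v
    · rw [h_eq hy, stretch_self, stretch_self]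
  convert AmbientIsotopic.union_graphOn (F := fun t y => stretch (r y) (R t y))
    (G := fun t y => stretch (R t y) (r y)) ?_ ?_ (fun y v => ?_)
    (fun t ht y => h_inv y (fun hy => ⟨hrU y hy, hR_pos ht hy⟩) fun hy => (hR_fix t hy).symm)
    (fun t ht y => h_inv y (fun hy => ⟨hR_pos ht hy, hrU y hy⟩) (hR_fix t)) s a b using 4
  · simp [R]
  · simp [R]
  · refine continuousOn_of_norm_sub_le (β := fun y => |ρ y - r y|)
      (F := fun t y => stretch (r y) (R t y)) hU ?_ (by fun_prop) (fun y hy => by simp [hU₀ y hy])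
      fun t ht y v => (norm_stretch_sub_le _ _ v).trans (hR_sub_le ht y)
    exact continuousOn_stretch (by fun_prop) (fun q hq => hrU _ hq.2.1) hR_cont.continuousOn
      (by fun_prop)
  · refine continuousOn_of_norm_sub_le (β := fun y => |ρ y - r y|)
      (F := fun t y => stretch (R t y) (r y)) hU ?_ (by fun_prop) (fun y hy => by simp [hU₀ y hy])
      fun t ht y v =>
        (norm_stretch_sub_le _ _ v).trans ((abs_sub_comm _ _).trans_le (hR_sub_le ht y))
    exact continuousOn_stretch hR_cont.continuousOn (fun q hq => hR_pos hq.1 hq.2.1) (by fun_prop)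
      (by fun_prop)
  · simp [R, stretch_self]

theorem exists_continuousOn_exp_mul_eq_norm [LocallyPathConnectedSpace Y] {U : Set Y}
    (hU : IsSimplyConnected U) (hU' : IsOpen U) {c : Y → ℂ} (hc : ContinuousOn c U)
    (hc₀ : ∀ y ∈ U, c y ≠ 0) :
    ∃ θ : Y → ℝ, ContinuousOn θ U ∧ ∀ y ∈ U, Complex.exp (θ y * Complex.I) * c y = ‖c y‖ := by
  obtain ⟨l, hl, h_exp⟩ := Complex.exists_continuousOn_eqOn_exp_comp hU hU' hc
    (by rintro ⟨y, hy, hy₀⟩; exact hc₀ y hy hy₀)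
  refine ⟨fun y => -(l y).im, (Complex.continuous_im.comp_continuousOn hl).neg, fun y hy => ?_⟩
  have h_lift : Complex.exp (l y) = c y := h_exp hy
  rw [← h_lift, Complex.norm_exp, ← Complex.exp_add, Complex.ofReal_exp]
  congr 1
  apply Complex.ext <;> simp

theorem ambientIsotopic_graphOn_of_ne [LocallyPathConnectedSpace Y] {U : Set Y} (hU : IsOpen U)
    (hU' : IsSimplyConnected U) {a b : Y → ℂ} (ha : Continuous a) (hb : Continuous b)
    (hab : ∀ y, a y ≠ b y ↔ y ∈ U) {ρ : Y → ℝ} (hρ : Continuous ρ) (hρU : ∀ y ∈ U, 0 < ρ y)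
    (hρ₀ : ∀ y ∉ U, ρ y = 0) (s : Set Y) :
    AmbientIsotopic (s.graphOn a ∪ s.graphOn b)
      (s.graphOn (fun y => (ρ y : ℂ)) ∪ s.graphOn (fun y => -(ρ y : ℂ))) := by
  let c (y : Y) : ℂ := (2⁻¹ : ℝ) • (a y - b y)
  have hc : Continuous c := by fun_prop
  have hcU (y : Y) : ‖c y‖ ≠ 0 ↔ y ∈ U := by
    rw [← hab, norm_ne_zero_iff, smul_ne_zero_iff_right (by norm_num), sub_ne_zero]
  obtain ⟨θ, hθ, h_polar⟩ := exists_continuousOn_exp_mul_eq_norm hU' hU hc.continuousOn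
    fun y hy => norm_ne_zero_iff.1 ((hcU y).2 hy)
  have h_twist_eq (y : Y) : twist ‖c y‖ (θ y) (c y) = ‖c y‖ := by
    by_cases hy : y ∈ U
    · rw [twist_of_norm_eq ((hcU y).2 hy) _ rfl, h_polar y hy]
    · simp [norm_eq_zero.1 (not_not.1 (mt (hcU y).1 hy)), twist]
  have h_stretch_eq (y : Y) : stretch ‖c y‖ (ρ y) (‖c y‖ : ℂ) = ρ y := by
    by_cases hy : y ∈ U
    · have := (hcU y).2 hy
      rw [stretch_of_norm_eq this _ (by simp), Complex.real_smul, ← Complex.ofReal_mul,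
        div_mul_cancel₀ _ this]
    · rw [hρ₀ y hy, not_not.1 (mt (hcU y).1 hy), stretch_self]
  have h_translate := ambientIsotopic_graphOn_translate (m := fun y => (2⁻¹ : ℝ) • (a y + b y))
    (by fun_prop) s a b
  have h_twist := ambientIsotopic_graphOn_twist hU hc.norm (fun y => norm_nonneg (c y)) hcU hθ s
    c (fun y => -c y)
  have h_stretch := ambientIsotopic_graphOn_stretch hU hc.norm hρ
    (fun y hy => (norm_nonneg (c y)).lt_of_ne' ((hcU y).2 hy)) hρU
    (fun y hy => (not_not.1 (mt (hcU y).1 hy)).trans (hρ₀ y hy).symm) s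
    (fun y => (‖c y‖ : ℂ)) (fun y => -(‖c y‖ : ℂ))
  simp only [twist_neg, h_twist_eq] at h_twist
  simp only [stretch_neg, h_stretch_eq] at h_stretch
  have h_add (y : Y) : a y - (2⁻¹ : ℝ) • (a y + b y) = c y := by module
  have h_sub (y : Y) : b y - (2⁻¹ : ℝ) • (a y + b y) = -c y := by module
  simp only [h_add, h_sub] at h_translate
  exact h_translate.trans (h_twist.trans h_stretch)

end GraphIsotopy

section UnimodalCurves

theorem exists_continuousOn_image_eqOn_comp {T Y V : Type*} [TopologicalSpace T] [Nonempty T]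
    [TopologicalSpace Y] [T2Space Y] [TopologicalSpace V] {S : Set T} (hS : IsCompact S)
    {φ : T → Y} (hφ : ContinuousOn φ S) (hinj : InjOn φ S) {ψ : T → V} (hψ : ContinuousOn ψ S) :
    ∃ a : Y → V, ContinuousOn a (φ '' S) ∧ EqOn (a ∘ φ) ψ S := by
  have h_left {t : T} (ht : t ∈ S) : Function.invFunOn φ S (φ t) = t :=
    hinj.leftInvOn_invFunOn ht
  refine ⟨ψ ∘ Function.invFunOn φ S, continuousOn_iff_isClosed.2 fun C hC => ?_,
    fun t ht => congrArg ψ (h_left ht)⟩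
  obtain ⟨D, hD, hCD⟩ := continuousOn_iff_isClosed.1 hψ C hC
  refine ⟨φ '' (D ∩ S), ((hS.inter_left hD).image_of_continuousOn
    (hφ.mono inter_subset_right)).isClosed, ?_⟩
  rw [← hCD, inter_eq_left.2 (image_mono inter_subset_right)]
  ext y
  constructor
  · rintro ⟨hy, t, ht, rfl⟩
    refine ⟨t, ⟨?_, ht⟩, rfl⟩
    simpa only [mem_preimage, Function.comp_apply, h_left ht] using hy
  · rintro ⟨t, ⟨hC, ht⟩, rfl⟩
    refine ⟨?_, t, ht, rfl⟩
    simpa only [mem_preimage, Function.comp_apply, h_left ht] using hC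

theorem image_eq_graphOn {T Y V : Type*} {S : Set T} {γ : T → Y × V} {a : Y → V}
    (h : ∀ t ∈ S, a (γ t).1 = (γ t).2) : γ '' S = ((fun t => (γ t).1) '' S).graphOn a := by
  rw [graphOn, image_image]
  exact image_congr fun t ht => by rw [h t ht]

/-- The round unit circle, with the first coordinate of `ℝ³` split off. -/
def roundCircle : Set (ℝ × ℂ) :=
  {x | x.1 ^ 2 + x.2.re ^ 2 = 1 ∧ x.2.im = 0}

theorem union_graphOn_sqrt : (Icc (-1) 1).graphOn (fun y : ℝ => (√(1 - y ^ 2) : ℂ)) ∪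
    (Icc (-1) 1).graphOn (fun y : ℝ => -(√(1 - y ^ 2) : ℂ)) = roundCircle := by
  ext ⟨y, w⟩
  simp only [mem_union, mem_graphOn, roundCircle, mem_ofPred_eq]
  constructor
  · rintro (⟨hy, rfl⟩ | ⟨hy, rfl⟩) <;>
      simp [Real.sq_sqrt (show 0 ≤ 1 - y ^ 2 by nlinarith [hy.1, hy.2])]
  · rintro ⟨h_sq, h_im⟩
    have hy : y ∈ Icc (-1) 1 :=
      abs_le.1 ((sq_le_one_iff_abs_le_one y).1 (by nlinarith [sq_nonneg w.re]))
    have h_sqrt : √(1 - y ^ 2) = |w.re| := by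
      rw [← Real.sqrt_sq_eq_abs, ← h_sq, add_sub_cancel_left]
    have hw : w = (w.re : ℂ) := Complex.ext rfl h_im
    rw [h_sqrt]
    rcases abs_choice w.re with h | h
    · exact Or.inl ⟨hy, by rw [h]; exact hw.symm⟩
    · exact Or.inr ⟨hy, by rw [h, Complex.ofReal_neg, neg_neg]; exact hw.symm⟩

theorem ambientIsotopic_union_graphOn_roundCircle {a b : ℝ → ℂ} (ha : ContinuousOn a (Icc (-1) 1))
    (hb : ContinuousOn b (Icc (-1) 1)) (hab : ∀ y ∈ Ioo (-1) 1, a y ≠ b y)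
    (h₁ : a (-1) = b (-1)) (h₂ : a 1 = b 1) :
    AmbientIsotopic ((Icc (-1) 1).graphOn a ∪ (Icc (-1) 1).graphOn b) roundCircle := by
  have h_le : (-1 : ℝ) ≤ 1 := by norm_num
  have h_simply : IsSimplyConnected (Ioo (-1 : ℝ) 1) := by
    have : ContractibleSpace (Ioo (-1 : ℝ) 1) :=
      (convex_Ioo (-1) 1).contractibleSpace (nonempty_Ioo.2 (by norm_num))
    exact SimplyConnectedSpace.ofContractible _
  have h_ext {a : ℝ → ℂ} : (Icc (-1) 1).graphOn (IccExtend h_le ((Icc (-1) 1).domRestrict a)) =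
      (Icc (-1) 1).graphOn a :=
    graphOn_inj.2 fun y hy => IccExtend_of_mem h_le _ hy
  rw [← union_graphOn_sqrt, ← h_ext (a := a), ← h_ext (a := b)]
  refine ambientIsotopic_graphOn_of_ne isOpen_Ioo h_simply ha.domRestrict.Icc_extend'
    hb.domRestrict.Icc_extend' (fun y => ?_) (by fun_prop) (fun y hy => ?_) (fun y hy => ?_) _
  · rcases le_or_gt y (-1) with hy | hy
    · simp [IccExtend_of_le_left _ _ hy, hy.not_gt, h₁]
    rcases le_or_gt 1 y with hy' | hy'
    · simp [IccExtend_of_right_le _ _ hy', hy'.not_gt, h₂]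
    · rw [IccExtend_of_mem _ _ ⟨hy.le, hy'.le⟩, IccExtend_of_mem _ _ ⟨hy.le, hy'.le⟩]
      exact iff_of_true (hab y ⟨hy, hy'⟩) ⟨hy, hy'⟩
  · exact Real.sqrt_pos.2 (by nlinarith [hy.1, hy.2])
  · refine Real.sqrt_eq_zero_of_nonpos (sub_nonpos.2 ?_)
    rw [one_le_sq_iff_one_le_abs, le_abs']
    by_contra! h
    exact hy h

theorem StrictUnimodal.eq_of_coe_eq_coe {f : AddCircle (1 : ℝ) → ℝ} {s p : ℝ}
    (h : StrictUnimodal f s p) {t t' : ℝ} (ht : t ∈ Ioc s p) (ht' : t' ∈ Icc p (s + 1))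
    (h_eq : (t : AddCircle (1 : ℝ)) = t') : t = p := by
  have : t = t' := (AddCircle.coe_eq_coe_iff_of_mem_Ioc ⟨ht.1, ht.2.trans h.lt_add_one.le⟩
    ⟨h.lt.trans_le ht'.1, ht'.2⟩).1 h_eq
  exact le_antisymm ht.2 (this ▸ ht'.1)

theorem StrictUnimodal.ambientIsotopic_roundCircle {γ : AddCircle (1 : ℝ) → ℝ × ℂ}
    (hγ : Continuous γ) (hinj : Function.Injective γ) {s p : ℝ}
    (h : StrictUnimodal (fun θ => (γ θ).1) s p) (hs : (γ s).1 = -1) (hp : (γ p).1 = 1) :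
    AmbientIsotopic (range γ) roundCircle := by
  let g : ℝ → ℝ × ℂ := fun t => γ t
  have hg : Continuous g := hγ.comp (AddCircle.continuous_mk' 1)
  have h_period : g (s + 1) = g s := congrArg γ (AddCircle.coe_add_period 1 s)
  have h_up : (fun t => (g t).1) '' Icc s p = Icc (-1) 1 := by
    rw [hg.fst.continuousOn.image_Icc_of_monotoneOn h.lt.le h.strictMonoOn.monotoneOn, hs, hp]
  have h_down : (fun t => (g t).1) '' Icc p (s + 1) = Icc (-1) 1 := by
    rw [hg.fst.continuousOn.image_Icc_of_antitoneOn h.lt_add_one.le h.strictAntiOn.antitoneOn,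
      h_period, hs, hp]
  obtain ⟨a, ha, h_a⟩ := exists_continuousOn_image_eqOn_comp isCompact_Icc hg.fst.continuousOn
    h.strictMonoOn.injOn hg.snd.continuousOn
  obtain ⟨b, hb, h_b⟩ := exists_continuousOn_image_eqOn_comp isCompact_Icc hg.fst.continuousOn
    h.strictAntiOn.injOn hg.snd.continuousOn
  have h_range : range γ = (Icc (-1) 1).graphOn a ∪ (Icc (-1) 1).graphOn b := by
    rw [← h_up, ← image_eq_graphOn h_a, h_up, ← h_down, ← image_eq_graphOn h_b, ← image_union,
      Icc_union_Icc_eq_Icc h.lt.le h.lt_add_one.le, ← image_univ,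
      ← AddCircle.coe_image_Icc_eq 1 s, image_image]
  rw [h_range]
  refine ambientIsotopic_union_graphOn_roundCircle (h_up ▸ ha) (h_down ▸ hb)
    (fun y hy hab => ?_) ?_ ?_
  · obtain ⟨t, ht, rfl⟩ : y ∈ (fun t => (g t).1) '' Icc s p := h_up ▸ Ioo_subset_Icc_self hy
    obtain ⟨t', ht', h_height⟩ : (g t).1 ∈ (fun t => (g t).1) '' Icc p (s + 1) :=
      h_down ▸ Ioo_subset_Icc_self hy
    have h_snd : (g t).2 = (g t').2 :=
      (h_a ht).symm.trans (hab.trans ((congrArg b h_height.symm).trans (h_b ht')))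
    have h_ne : t ≠ s := fun h_ts => hy.1.ne' (h_ts ▸ hs)
    have h_tp : t = p := h.eq_of_coe_eq_coe ⟨ht.1.lt_of_ne' h_ne, ht.2⟩ ht'
      (hinj (Prod.ext h_height.symm h_snd))
    exact hy.2.ne (h_tp ▸ hp)
  · have h_bs := h_b (right_mem_Icc.2 h.lt_add_one.le)
    simp only [Function.comp_apply, h_period] at h_bs
    rw [← hs]
    exact (h_a (left_mem_Icc.2 h.lt.le)).trans h_bs.symm
  · rw [← hp]
    exact (h_a (right_mem_Icc.2 h.lt.le)).trans (h_b (left_mem_Icc.2 h.lt_add_one.le)).symm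

end UnimodalCurves

section FaryMilnor

theorem StrictUnimodal.strictMono_comp {f : AddCircle (1 : ℝ) → ℝ} {s p : ℝ}
    (h : StrictUnimodal f s p) {φ : ℝ → ℝ} (hφ : StrictMono φ) : StrictUnimodal (φ ∘ f) s p where
  lt := h.lt
  lt_add_one := h.lt_add_one
  strictMonoOn := hφ.comp_strictMonoOn h.strictMonoOn
  strictAntiOn := hφ.comp_strictAntiOn h.strictAntiOn

/-- `ℝ³` as `ℝ × ℂ`, the first coordinate being split off and the other two forming a complex
number. -/
def realProdComplexHomeomorph : EuclideanSpace ℝ (Fin 3) ≃ₜ ℝ × ℂ where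
  toFun v := (v 0, ⟨v 1, v 2⟩)
  invFun z := !₂[z.1, z.2.re, z.2.im]
  left_inv v := by ext i; fin_cases i <;> rfl
  right_inv _ := rfl
  continuous_toFun := by
    have : Continuous fun v : EuclideanSpace ℝ (Fin 3) => (v 1 + v 2 * Complex.I : ℂ) := by
      fun_prop
    exact Continuous.prodMk (by fun_prop) (this.congr fun v => (Complex.mk_eq_add_mul_I _ _).symm)
  continuous_invFun := (PiLp.continuous_toLp 2 _).comp <| continuous_pi_iff.2 fun i => by
    fin_cases i
    · exact continuous_fst
    · exact Complex.continuous_re.comp continuous_snd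
    · exact Complex.continuous_im.comp continuous_snd

theorem realProdComplexHomeomorph_image_circle : realProdComplexHomeomorph ''
    {v | v 0 ^ 2 + v 1 ^ 2 = 1 ∧ v 2 = 0} = roundCircle := by
  rw [realProdComplexHomeomorph.image_eq_preimage_symm]
  rfl

theorem inner_eq_realProdComplexHomeomorph (v x : EuclideanSpace ℝ (Fin 3)) :
    ⟪v, x⟫ = x 0 * (realProdComplexHomeomorph v).1 + (x 1 * (realProdComplexHomeomorph v).2.re +
      x 2 * (realProdComplexHomeomorph v).2.im) := by
  rw [← add_assoc, PiLp.inner_apply, Fin.sum_univ_three]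
  rfl

theorem injective_shear {V : Type*} {L : V → ℝ} {q : ℝ} (hq : q ≠ 0) :
    Function.Injective fun z : ℝ × V => (L z.2 + q * z.1, z.2) := by
  rintro ⟨y, w⟩ ⟨y', w'⟩ h_eq
  obtain ⟨h_fst, rfl⟩ := Prod.mk.inj h_eq
  exact Prod.ext (mul_left_cancel₀ hq (add_left_cancel h_fst)) rfl

theorem unknotted_of_strictUnimodal_of_pos {K : AddCircle (1 : ℝ) → EuclideanSpace ℝ (Fin 3)}
    (hK : Continuous K) (hinj : Function.Injective K) {x : EuclideanSpace ℝ (Fin 3)}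
    (hx : 0 < x 0) {s p : ℝ} (h : StrictUnimodal (fun θ => ⟪K θ, x⟫) s p) : Unknotted K := by
  let e := realProdComplexHomeomorph
  let α := ⟪K s, x⟫
  let β := ⟪K p, x⟫
  have hαβ : 0 < β - α := sub_pos.2 <|
    h.strictMonoOn (left_mem_Icc.2 h.lt.le) (right_mem_Icc.2 h.lt.le) h.lt
  let normalize : ℝ → ℝ := fun y => (2 * y - (α + β)) / (β - α)
  have h_normalize : StrictMono normalize := fun y y' hy => by
    simp only [normalize]
    gcongr
  let L : ℂ → ℝ := fun w => normalize (x 1 * w.re + x 2 * w.im)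
  have hL : Continuous L := by fun_prop
  let q : ℝ := 2 * x 0 / (β - α)
  have hq : 0 < q := by positivity
  let S : ℝ × ℂ → ℝ × ℂ := fun z => (L z.2 + q * z.1, z.2)
  have h_height (v : EuclideanSpace ℝ (Fin 3)) : (S (e v)).1 = normalize ⟪v, x⟫ := by
    simp only [S, L, q, e, normalize, inner_eq_realProdComplexHomeomorph]
    ring
  have h_circle : AmbientIsotopic (range (S ∘ e ∘ K)) roundCircle := by
    refine StrictUnimodal.ambientIsotopic_roundCircle (s := s) (p := p) (by fun_prop)
      ((injective_shear hq.ne').comp (e.injective.comp hinj)) ?_ ?_ ?_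
    · simpa only [Function.comp_def, h_height] using h.strictMono_comp h_normalize
    · exact (h_height _).trans ((div_eq_iff hαβ.ne').2 (by ring))
    · exact (h_height _).trans ((div_eq_iff hαβ.ne').2 (by ring))
  refine AmbientIsotopic.of_image e ?_
  rw [realProdComplexHomeomorph_image_circle]
  rw [range_comp, range_comp] at h_circle
  exact (AmbientIsotopic.shear hL hq _).trans h_circle

theorem unknotted_of_strictUnimodal {K : AddCircle (1 : ℝ) → EuclideanSpace ℝ (Fin 3)}
    (hK : Continuous K) (hinj : Function.Injective K) {x : EuclideanSpace ℝ (Fin 3)}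
    (hx : x 0 ≠ 0) {s p : ℝ} (h : StrictUnimodal (fun θ => ⟪K θ, x⟫) s p) : Unknotted K := by
  rcases hx.lt_or_gt with hx | hx
  · refine unknotted_of_strictUnimodal_of_pos hK hinj (x := -x) (neg_pos.2 hx) ?_
      (s := p) (p := s + 1)
    simpa only [inner_neg_right] using! h.neg
  · exact unknotted_of_strictUnimodal_of_pos hK hinj hx h

end FaryMilnor

/-- Fáry/Milnor theorem: a knotted closed curve in `ℝ³` has total
curvature at least `4π`. -/
theorem fary_milnor (K : AddCircle (1 : ℝ) → EuclideanSpace ℝ (Fin 3))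
    (hK : Continuous K) (hinj : Function.Injective K) (hknot : ¬ Unknotted K) :
    ENNReal.ofReal (4 * Real.pi) ≤ loopTC K := by
  by_contra! hTC
  let D : Set ℝ := range ((↑) : ℚ → ℝ)
  have hD : ((↑) '' D : Set (AddCircle (1 : ℝ))).Countable := (countable_range _).image _
  obtain ⟨x, ⟨hx₀, hx_inj⟩, hx_turns⟩ := exists_frequently_turnCount_lt (k := 4) hinj hTC
    ((ae_inner_ne_zero (a := EuclideanSpace.single 0 1) (by simp)).and (ae_injOn_inner hinj hD))
  let f : AddCircle (1 : ℝ) → ℝ := fun θ => ⟪K θ, x⟫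
  have hf : Continuous f := by fun_prop
  have hf_peaks : ¬HasTwoPeaks f := fun h => hx_turns <|
    (h.eventually_four_le_turnCount hf (by rwa [range_comp'])).mono fun n hn => hn.not_gt
  obtain ⟨s, p, h_unimodal⟩ :=
    exists_strictUnimodal_of_not_hasTwoPeaks hf Rat.denseRange_cast hx_inj hf_peaks
  have hx₀' : x 0 ≠ 0 := by simpa [EuclideanSpace.inner_single_left] using hx₀
  exact hknot (unknotted_of_strictUnimodal hK hinj hx₀' h_unimodal)
end

section
/- (Cauchy/Crofton formula) Let γ : [0,1] → ℝ² be a continuous curve. Then Len(γ) = (π/2) ∫_{S¹} Len(⟨γ(·), v⟩) dσ(v), as an identity in [0,∞], where σ is the uniform (rotation-invariant) probability measure on the unit circle S¹ and Len(⟨γ(·), v⟩) is the length (total variation) of the real-valued curve t ↦ ⟨γ(t), v⟩. In words: the length of a plane curve equals π/2 times the average length of its orthogonal projections to lines. -/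
open Set Filter MeasureTheory
open scoped ENNReal NNReal RealInnerProductSpace

/-!
Averaging `|⟪x, v⟫|` over a rotation-invariant `σ` gives a multiple of `‖x‖`, so the formula holds
for each edge of an inscribed polygon, hence for each polygon. To pass to the supremum over
polygons, note that `v ↦ Len(⟪P, v⟫)` is continuous for each polygon `P` and increases under
refinement: the length of the projected curve is thus the supremum of an upward directed family of
continuous functions of `v`, and on a second countable space such a supremum commutes with the
integral.
-/

section DirectedSupremum

variable {X : Type*} [TopologicalSpace X] [HereditarilyLindelofSpace X] [MeasurableSpace X]
  [OpensMeasurableSpace X]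

theorem lintegral_iSup_directed_of_lowerSemicontinuous {ι : Type*} {f : ι → X → ℝ≥0∞}
    (μ : Measure X) (hf : ∀ i, LowerSemicontinuous (f i)) (hdir : Directed (· ≤ ·) f) :
    ∫⁻ x, ⨆ i, f i x ∂μ = ⨆ i, ∫⁻ x, f i x ∂μ := by
  rcases isEmpty_or_nonempty ι with _ | _
  · simp
  refine le_antisymm ?_ (iSup_lintegral_le f)
  obtain ⟨𝓕, h𝓕f, h𝓕count, h𝓕lub⟩ :=
    exists_countable_lowerSemicontinuous_isLUB (forall_mem_range.2 hf) (isLUB_iSup (f := f))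
  have : Countable 𝓕 := h𝓕count.to_subtype
  choose index hindex using fun g : 𝓕 => h𝓕f g.2
  -- A countable subfamily need not be directed, but its finite suprema are.
  let F (t : Finset 𝓕) (x : X) : ℝ≥0∞ := ⨆ g ∈ t, g.1 x
  have hF_meas (t : Finset 𝓕) : Measurable (F t) :=
    .biSup _ t.countable_toSet fun g _ => hindex g ▸ (hf (index g)).measurable
  have hF_mono : Monotone F := fun s t hst x => biSup_mono fun g hg => hst hg
  have hF_iSup (x : X) : ⨆ i, f i x = ⨆ t, F t x := by
    rw [← iSup_apply, ← h𝓕lub.sSup_eq, sSup_apply]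
    exact iSup_eq_iSup_finset _
  calc ∫⁻ x, ⨆ i, f i x ∂μ = ⨆ t, ∫⁻ x, F t x ∂μ := by
        simp_rw [hF_iSup]
        exact lintegral_iSup_directed_of_measurable hF_meas hF_mono.directed_le
    _ ≤ ⨆ i, ∫⁻ x, f i x ∂μ := iSup_le fun t => by
        classical
        obtain ⟨i, hi⟩ := hdir.finset_le (t.image index)
        refine le_iSup_of_le i (lintegral_mono fun x => iSup₂_le fun g hg => ?_)
        exact hindex g ▸ hi (index g) (Finset.mem_image_of_mem index hg) x

end DirectedSupremum

section InscribedPolygons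

variable {a b : ℝ} {m n : ℕ} {u w : ℕ → ℝ}

theorem InscribedIn.strictMonoOn (hu : InscribedIn a b m u) : StrictMonoOn u (Iic m) :=
  strictMonoOn_Iic_of_lt_succ hu.1

theorem exists_inscribedIn_of_finset {S : Finset ℝ} (hS : S.Nonempty) (hSab : ↑S ⊆ Icc a b) :
    ∃ n w, InscribedIn a b n w ∧ ↑S ⊆ w '' Iic n := by
  obtain ⟨n, hn⟩ := Nat.exists_eq_add_one_of_ne_zero hS.card_pos.ne'
  let e := S.orderEmbOfFin hn
  refine ⟨n, fun i => e (Fin.ofNat (n + 1) i), ⟨fun i hi => ?_, fun i _ => ?_⟩, fun x hx => ?_⟩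
  · refine e.strictMono (Fin.lt_def.2 ?_)
    simp only [Fin.val_ofNat]
    rw [Nat.mod_eq_of_lt (by omega), Nat.mod_eq_of_lt (by omega)]
    exact i.lt_succ_self
  · exact hSab (S.orderEmbOfFin_mem hn _)
  · rw [← S.range_orderEmbOfFin hn] at hx
    obtain ⟨j, rfl⟩ := hx
    exact ⟨j, Nat.lt_succ_iff.1 j.2, by simp [e]⟩

theorem InscribedIn.exists_common_refinement (hu : InscribedIn a b m u)
    (hw : InscribedIn a b n w) :
    ∃ k z, InscribedIn a b k z ∧ u '' Iic m ⊆ z '' Iic k ∧ w '' Iic n ⊆ z '' Iic k := by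
  classical
  let S : Finset ℝ := (Finset.Iic m).image u ∪ (Finset.Iic n).image w
  have hS : (S : Set ℝ) = u '' Iic m ∪ w '' Iic n := by simp [S]
  have hne : S.Nonempty := ⟨u m, by rw [← Finset.mem_coe, hS]; exact .inl ⟨m, self_mem_Iic, rfl⟩⟩
  have hSab : ↑S ⊆ Icc a b := by
    rw [hS]
    exact union_subset (image_subset_iff.2 hu.2) (image_subset_iff.2 hw.2)
  obtain ⟨k, z, hz, hSz⟩ := exists_inscribedIn_of_finset hne hSab
  rw [hS, union_subset_iff] at hSz
  exact ⟨k, z, hz, hSz⟩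

theorem sum_dist_comp_le {E : Type*} [PseudoMetricSpace E] (g : ℕ → E) {k : ℕ → ℕ}
    (hk : ∀ i < m, k i ≤ k (i + 1)) :
    ∑ i ∈ Finset.range m, dist (g (k i)) (g (k (i + 1)))
      ≤ ∑ j ∈ Finset.range (k m), dist (g j) (g (j + 1)) := by
  induction m with
  | zero => simpa using Finset.sum_nonneg fun _ _ => dist_nonneg
  | succ m ih =>
    rw [Finset.sum_range_succ, ← Finset.sum_range_add_sum_Ico _ (hk m m.lt_succ_self)]
    exact add_le_add (ih fun i hi => hk i (hi.trans m.lt_succ_self))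
      (dist_le_Ico_sum_dist g (hk m m.lt_succ_self))

variable {E : Type*} [NormedAddCommGroup E]

theorem polyLen_eq_sum_dist (γ : ℝ → E) (m : ℕ) (u : ℕ → ℝ) :
    polyLen γ m u = ∑ i ∈ Finset.range m, dist (γ (u i)) (γ (u (i + 1))) := by
  simp only [polyLen, dist_eq_norm']

theorem ofReal_polyLen (γ : ℝ → E) (m : ℕ) (u : ℕ → ℝ) :
    ENNReal.ofReal (polyLen γ m u) = ∑ i ∈ Finset.range m, ‖γ (u (i + 1)) - γ (u i)‖ₑ := by
  simp only [polyLen, ENNReal.ofReal_sum_of_nonneg fun _ _ => norm_nonneg _, ofReal_norm]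

theorem polyLen_le_of_refinement (γ : ℝ → E) (hu : InscribedIn a b m u)
    (hw : InscribedIn a b n w) (huw : u '' Iic m ⊆ w '' Iic n) :
    polyLen γ m u ≤ polyLen γ n w := by
  choose! k hkn hk using fun i (hi : i ≤ m) => huw (mem_image_of_mem u hi)
  have hk_mono : ∀ i < m, k i ≤ k (i + 1) := fun i hi =>
    (hw.strictMonoOn.le_iff_le (hkn i hi.le) (hkn (i + 1) hi)).1 <| by
      rw [hk i hi.le, hk (i + 1) hi]
      exact (hu.1 i hi).le
  calc polyLen γ m u
      = ∑ i ∈ Finset.range m, dist (γ (w (k i))) (γ (w (k (i + 1)))) := by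
        rw [polyLen_eq_sum_dist]
        refine Finset.sum_congr rfl fun i hi => ?_
        have hi := Finset.mem_range.1 hi
        rw [hk i hi.le, hk (i + 1) hi]
    _ ≤ ∑ j ∈ Finset.range (k m), dist (γ (w j)) (γ (w (j + 1))) :=
        sum_dist_comp_le (fun j => γ (w j)) hk_mono
    _ ≤ ∑ j ∈ Finset.range n, dist (γ (w j)) (γ (w (j + 1))) :=
        Finset.sum_le_sum_of_subset_of_nonneg (Finset.range_subset_range.2 (hkn m le_rfl))
          fun _ _ _ => dist_nonneg
    _ = polyLen γ n w := (polyLen_eq_sum_dist γ n w).symm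

/-- The polygons inscribed in a curve on `[a,b]`, each encoded as its number of edges together with
its parameters: the index type of the supremum defining `arcLen`. -/
abbrev InscribedPolygon (a b : ℝ) : Type :=
  {P : ℕ × (ℕ → ℝ) // InscribedIn a b P.1 P.2}

theorem arcLen_eq_iSup (γ : ℝ → E) (a b : ℝ) :
    arcLen γ a b = ⨆ P : InscribedPolygon a b, ENNReal.ofReal (polyLen γ P.1.1 P.1.2) := by
  rw [arcLen, iSup_subtype, iSup_prod]

theorem directed_ofReal_polyLen {ι : Type*} (γ : ι → ℝ → E) (a b : ℝ) :
    Directed (· ≤ ·) fun (P : InscribedPolygon a b) (i : ι) =>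
      ENNReal.ofReal (polyLen (γ i) P.1.1 P.1.2) := by
  intro P Q
  obtain ⟨k, z, hz, hPz, hQz⟩ := P.2.exists_common_refinement Q.2
  exact ⟨⟨(k, z), hz⟩,
    fun i => ENNReal.ofReal_le_ofReal (polyLen_le_of_refinement (γ i) P.2 hz hPz),
    fun i => ENNReal.ofReal_le_ofReal (polyLen_le_of_refinement (γ i) Q.2 hz hQz)⟩

end InscribedPolygons

section InnerProductSpace

variable {E : Type*} [NormedAddCommGroup E] [InnerProductSpace ℝ E]

theorem ofReal_polyLen_inner (γ : ℝ → E) (m : ℕ) (u : ℕ → ℝ) (v : E) :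
    ENNReal.ofReal (polyLen (fun t => ⟪γ t, v⟫) m u)
      = ∑ i ∈ Finset.range m, ‖⟪γ (u (i + 1)) - γ (u i), v⟫‖ₑ := by
  simp only [ofReal_polyLen, inner_sub_left]

theorem continuous_ofReal_polyLen_inner (γ : ℝ → E) (m : ℕ) (u : ℕ → ℝ) :
    Continuous fun v => ENNReal.ofReal (polyLen (fun t => ⟪γ t, v⟫) m u) := by
  simp only [ofReal_polyLen_inner]
  fun_prop

variable [MeasurableSpace E] [BorelSpace E] {σ : Measure E}

theorem lintegral_arcLen_inner [SecondCountableTopology E] {k c : ℝ≥0∞}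
    (hσ : ∀ x, k * ∫⁻ v, ‖⟪x, v⟫‖ₑ ∂σ = c * ‖x‖ₑ) (γ : ℝ → E) (a b : ℝ) :
    k * ∫⁻ v, arcLen (fun t => ⟪γ t, v⟫) a b ∂σ = c * arcLen γ a b := by
  have lintegral_polyLen (m : ℕ) (u : ℕ → ℝ) :
      k * ∫⁻ v, ENNReal.ofReal (polyLen (fun t => ⟪γ t, v⟫) m u) ∂σ
        = c * ENNReal.ofReal (polyLen γ m u) := by
    simp only [ofReal_polyLen_inner]
    rw [lintegral_finsetSum _ fun i _ => by fun_prop, ofReal_polyLen]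
    simp only [Finset.mul_sum, hσ]
  have hlsc (P : InscribedPolygon a b) :
      LowerSemicontinuous fun v => ENNReal.ofReal (polyLen (fun t => ⟪γ t, v⟫) P.1.1 P.1.2) :=
    (continuous_ofReal_polyLen_inner γ P.1.1 P.1.2).lowerSemicontinuous
  simp only [arcLen_eq_iSup]
  rw [lintegral_iSup_directed_of_lowerSemicontinuous σ hlsc (directed_ofReal_polyLen _ a b)]
  simp only [ENNReal.mul_iSup, lintegral_polyLen]

theorem lintegral_enorm_inner_eq_of_norm_eq (hinv : ∀ g : E ≃ₗᵢ[ℝ] E, σ.map g = σ) {x y : E}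
    (hxy : ‖x‖ = ‖y‖) : ∫⁻ v, ‖⟪x, v⟫‖ₑ ∂σ = ∫⁻ v, ‖⟪y, v⟫‖ₑ ∂σ := by
  obtain ⟨g, rfl⟩ : ∃ g : E ≃ₗᵢ[ℝ] E, g x = y :=
    ⟨(ℝ ∙ (x - y))ᗮ.reflection, Submodule.reflection_sub hxy⟩
  have hmeas : Measurable fun v => ‖⟪g x, v⟫‖ₑ := by fun_prop
  calc ∫⁻ v, ‖⟪x, v⟫‖ₑ ∂σ = ∫⁻ v, ‖⟪g x, g v⟫‖ₑ ∂σ := by simp only [g.inner_map_map]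
    _ = ∫⁻ v, ‖⟪g x, v⟫‖ₑ ∂σ.map g := (lintegral_map hmeas g.continuous.measurable).symm
    _ = ∫⁻ v, ‖⟪g x, v⟫‖ₑ ∂σ := by rw [hinv g]

theorem lintegral_enorm_inner_eq_mul (hinv : ∀ g : E ≃ₗᵢ[ℝ] E, σ.map g = σ) {e : E}
    (he : ‖e‖ = 1) (x : E) : ∫⁻ v, ‖⟪x, v⟫‖ₑ ∂σ = (∫⁻ v, ‖⟪e, v⟫‖ₑ ∂σ) * ‖x‖ₑ := by
  have hx : ‖x‖ = ‖‖x‖ • e‖ := by rw [norm_smul, he, mul_one, norm_norm]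
  rw [lintegral_enorm_inner_eq_of_norm_eq hinv hx]
  simp only [real_inner_smul_left, enorm_mul, enorm_norm]
  rw [lintegral_const_mul' _ _ enorm_ne_top, mul_comm]

end InnerProductSpace

section Plane

theorem integral_abs_cos_sub (φ : ℝ) : ∫ θ in 0..Real.pi, |Real.cos (θ - φ)| = 2 := by
  have hperiodic : Function.Periodic (fun θ => |Real.cos θ|) Real.pi := fun θ => by
    simp only [Real.cos_add_pi, abs_neg]
  calc ∫ θ in 0..Real.pi, |Real.cos (θ - φ)|
      = ∫ θ in -φ..-φ + Real.pi, |Real.cos θ| := by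
        rw [intervalIntegral.integral_comp_sub_right (fun θ => |Real.cos θ|)]
        congr 1 <;> ring
    _ = ∫ θ in -(Real.pi / 2)..Real.pi / 2, |Real.cos θ| := by
        rw [hperiodic.intervalIntegral_add_eq (-φ) (-(Real.pi / 2))]
        congr 1; ring
    _ = ∫ θ in -(Real.pi / 2)..Real.pi / 2, Real.cos θ := by
        refine intervalIntegral.integral_congr fun θ hθ => ?_
        rw [uIcc_of_le (by linarith [Real.pi_pos])] at hθ
        exact abs_of_nonneg (Real.cos_nonneg_of_mem_Icc hθ)
    _ = 2 := by rw [integral_cos, Real.sin_neg, Real.sin_pi_div_two]; norm_num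

theorem lintegral_enorm_cos_sub (φ : ℝ) :
    ∫⁻ θ in Ioc 0 Real.pi, ‖Real.cos (θ - φ)‖ₑ = 2 := by
  have hcont : Continuous fun θ => Real.cos (θ - φ) := by fun_prop
  rw [← ofReal_integral_norm_eq_lintegral_enorm
    (hcont.integrableOn_Icc.mono_set Ioc_subset_Icc_self),
    ← intervalIntegral.integral_of_le Real.pi_pos.le]
  simp only [Real.norm_eq_abs, integral_abs_cos_sub, ENNReal.ofReal_ofNat]

/-- The unit vector of the plane with polar angle `θ`, used to parametrize the unit circle. -/
noncomputable def unitVec (θ : ℝ) : EuclideanSpace ℝ (Fin 2) := !₂[Real.cos θ, Real.sin θ]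

theorem norm_unitVec (θ : ℝ) : ‖unitVec θ‖ = 1 := by
  simp [unitVec, EuclideanSpace.norm_eq, Fin.sum_univ_two]

theorem continuous_unitVec : Continuous unitVec := by
  refine (PiLp.continuous_toLp 2 _).comp (continuous_pi fun i => ?_)
  fin_cases i
  exacts [Real.continuous_cos, Real.continuous_sin]

theorem inner_unitVec_unitVec (θ φ : ℝ) : ⟪unitVec θ, unitVec φ⟫ = Real.cos (θ - φ) := by
  simp [unitVec, PiLp.inner_apply, Fin.sum_univ_two, Real.cos_sub, mul_comm]

theorem exists_eq_norm_smul_unitVec (v : EuclideanSpace ℝ (Fin 2)) :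
    ∃ φ, v = ‖v‖ • unitVec φ := by
  let z : ℂ := Complex.orthonormalBasisOneI.repr.symm v
  have hz : v = Complex.orthonormalBasisOneI.repr z :=
    (LinearIsometryEquiv.apply_symm_apply _ v).symm
  have hnorm : ‖v‖ = ‖z‖ := (LinearIsometryEquiv.norm_map _ v).symm
  refine ⟨z.arg, ?_⟩
  rw [hnorm, hz]
  ext i
  fin_cases i
  · simp [unitVec, Complex.norm_mul_cos_arg]
  · simp [unitVec, Complex.norm_mul_sin_arg]

theorem lintegral_enorm_inner_unitVec (v : EuclideanSpace ℝ (Fin 2)) :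
    ∫⁻ θ in Ioc 0 Real.pi, ‖⟪unitVec θ, v⟫‖ₑ = 2 * ‖v‖ₑ := by
  obtain ⟨φ, hφ⟩ := exists_eq_norm_smul_unitVec v
  have hinner (θ : ℝ) : ‖⟪unitVec θ, v⟫‖ₑ = ‖v‖ₑ * ‖Real.cos (θ - φ)‖ₑ := by
    conv_lhs => rw [hφ, real_inner_smul_right, inner_unitVec_unitVec, enorm_mul, enorm_norm]
  simp only [hinner]
  rw [lintegral_const_mul' _ _ enorm_ne_top, lintegral_enorm_cos_sub, mul_comm]

theorem pi_div_two_mul_lintegral_enorm_inner_unitVec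
    {σ : Measure (EuclideanSpace ℝ (Fin 2))} [SFinite σ]
    (hinv : ∀ g : EuclideanSpace ℝ (Fin 2) ≃ₗᵢ[ℝ] EuclideanSpace ℝ (Fin 2), σ.map g = σ) (φ : ℝ) :
    ENNReal.ofReal (Real.pi / 2) * ∫⁻ v, ‖⟪unitVec φ, v⟫‖ₑ ∂σ = ∫⁻ v, ‖v‖ₑ ∂σ := by
  have hmeas : Measurable fun p : ℝ × EuclideanSpace ℝ (Fin 2) => ‖⟪unitVec p.1, p.2⟫‖ₑ :=
    ((continuous_unitVec.comp continuous_fst).inner continuous_snd).enorm.measurable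
  have haverage : ENNReal.ofReal Real.pi * ∫⁻ v, ‖⟪unitVec φ, v⟫‖ₑ ∂σ = 2 * ∫⁻ v, ‖v‖ₑ ∂σ :=
    calc ENNReal.ofReal Real.pi * ∫⁻ v, ‖⟪unitVec φ, v⟫‖ₑ ∂σ
        = ∫⁻ _ in Ioc 0 Real.pi, ∫⁻ v, ‖⟪unitVec φ, v⟫‖ₑ ∂σ := by
          rw [setLIntegral_const, Real.volume_Ioc, sub_zero, mul_comm]
      _ = ∫⁻ θ in Ioc 0 Real.pi, ∫⁻ v, ‖⟪unitVec θ, v⟫‖ₑ ∂σ :=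
          lintegral_congr fun θ => lintegral_enorm_inner_eq_of_norm_eq hinv <| by
            rw [norm_unitVec, norm_unitVec]
      _ = ∫⁻ v, (∫⁻ θ in Ioc 0 Real.pi, ‖⟪unitVec θ, v⟫‖ₑ) ∂σ :=
          lintegral_lintegral_swap hmeas.aemeasurable
      _ = 2 * ∫⁻ v, ‖v‖ₑ ∂σ := by
          simp only [lintegral_enorm_inner_unitVec]
          exact lintegral_const_mul _ measurable_enorm
  rw [ENNReal.ofReal_div_of_pos two_pos, ENNReal.ofReal_ofNat, div_eq_mul_inv, mul_right_comm,
    haverage, mul_right_comm, ENNReal.mul_inv_cancel two_ne_zero ENNReal.ofNat_ne_top, one_mul]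

theorem pi_div_two_mul_lintegral_enorm_inner {σ : Measure (EuclideanSpace ℝ (Fin 2))} [SFinite σ]
    (hinv : ∀ g : EuclideanSpace ℝ (Fin 2) ≃ₗᵢ[ℝ] EuclideanSpace ℝ (Fin 2), σ.map g = σ)
    (x : EuclideanSpace ℝ (Fin 2)) :
    ENNReal.ofReal (Real.pi / 2) * ∫⁻ v, ‖⟪x, v⟫‖ₑ ∂σ = (∫⁻ v, ‖v‖ₑ ∂σ) * ‖x‖ₑ := by
  rw [lintegral_enorm_inner_eq_mul hinv (norm_unitVec 0), ← mul_assoc,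
    pi_div_two_mul_lintegral_enorm_inner_unitVec hinv]

end Plane

theorem lintegral_enorm_eq_measure_univ {E : Type*} [SeminormedAddCommGroup E] [MeasurableSpace E]
    {σ : Measure E} (hσ : σ (Metric.sphere (0 : E) 1)ᶜ = 0) : ∫⁻ v, ‖v‖ₑ ∂σ = σ univ := by
  rw [← lintegral_one]
  refine lintegral_congr_ae ?_
  filter_upwards [mem_ae_iff.2 hσ] with v hv
  rw [← ofReal_norm, mem_sphere_zero_iff_norm.1 hv, ENNReal.ofReal_one]

theorem cauchy_crofton_general (γ : ℝ → EuclideanSpace ℝ (Fin 2)) (a b : ℝ)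
    {σ : Measure (EuclideanSpace ℝ (Fin 2))} [SFinite σ]
    (hinv : ∀ g : EuclideanSpace ℝ (Fin 2) ≃ₗᵢ[ℝ] EuclideanSpace ℝ (Fin 2), σ.map g = σ) :
    (∫⁻ v, ‖v‖ₑ ∂σ) * arcLen γ a b =
      ENNReal.ofReal (Real.pi / 2) * ∫⁻ v, arcLen (fun t => (⟪γ t, v⟫ : ℝ)) a b ∂σ :=
  (lintegral_arcLen_inner (pi_div_two_mul_lintegral_enorm_inner hinv) γ a b).symm

open scoped RealInnerProductSpace in
/-- Cauchy/Crofton formula: the length of a continuous plane curve equals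
`π/2` times the average length (total variation) of its orthogonal projections
`t ↦ ⟨γ t, v⟩` to lines, the average taken with respect to the uniform
(rotation-invariant) probability measure `σ` on the unit circle. -/
theorem cauchy_crofton (γ : ℝ → EuclideanSpace ℝ (Fin 2))
    (hγ : ContinuousOn γ (Set.Icc 0 1))
    (σ : MeasureTheory.Measure (EuclideanSpace ℝ (Fin 2)))
    [MeasureTheory.IsProbabilityMeasure σ]
    (hsupp : σ (Metric.sphere (0 : EuclideanSpace ℝ (Fin 2)) 1)ᶜ = 0)
    (hinv : ∀ g : EuclideanSpace ℝ (Fin 2) ≃ₗᵢ[ℝ] EuclideanSpace ℝ (Fin 2),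
      σ.map g = σ) :
    arcLen γ 0 1 = ENNReal.ofReal (Real.pi / 2) *
      ∫⁻ v, arcLen (fun t => (⟪γ t, v⟫ : ℝ)) 0 1 ∂σ := by
  rw [← cauchy_crofton_general γ 0 1 hinv, lintegral_enorm_eq_measure_univ hsupp, measure_univ,
    one_mul]
end
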